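/- arXiv:2205.15216 — 2 statements merged into one kernel-verified Lean document; each statement's English description precedes it below -/
import Mathlib

section
/- Let 1/2 < t < 1 and put δ := 1 - t. Suppose there exist positive real constants c₁, c₂, d₁, d₂, c_{λ,ν}, l, K, positive-valued functions ν₁, ν₂, λ₁, λ₂ : ℕ → ℝ_{>0}, positive real numbers ξ₁, ξ₂, η₁, η₂ (the values at t of positive functions on (1/2,1)), positive integers M, N₁, N₀ with N₁ < N₀, and a smooth (C^∞) increasing function f : ℝ_{≥1} → ℝ_{>0} such that for all integers n₀ ≥ N₀ and n₁ ≥ N₁ the following ten conditions hold: (1) f(n₀) ≥ K·f((1+l)·n₀) and K ≥ (2/3)^{1/2}; (2) c₁·ξ₁·ν₁(n₁)/f(n₁)^{t+δt} ≤ ∑_{n=1}^{n₁-1} f(n)^{-(t+δt)} ≤ c₂·ξ₂·ν₂(n₁)/f(n₁)^{t+δt}; (3) d₁·η₁·λ₁(n₁)/f(n₁)^{2t} ≤ ∑_{n=n₁}^{∞} f(n)^{-2t} ≤ d₂·η₂·λ₂(n₁)/f(n₁)^{2t} (in particular the series converges); (4) λ₁(n₀) ≥ c_{λ,ν}·ν₂(n₀);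 (5) λ₂(n₀) ≤ d₂^{-1}·η₂^{-1}·f(n₀)^{2t}; (6) M ≥ max{ 4^{1/(1-t)}·(c₂ξ₂/(c_{λ,ν}d₁η₁))^{2/(t(1-t))}, (50/K^{t(2-t)})^{2/(1-t)} }; (7) max_{x∈[n₀, n₀+9M²]} f'(x) ≤ (1/4752)·M^{-4}·f(n₀); (8) f(n₀+9M²) ≤ (264M²)^{1/t}·f(n₀); (9) 9M·f(n₀)^t ≤ l·n₀; (10) ν₁(n₀)·λ₂(n₀)^{-(1+δ)/2} ≥ ((d₂η₂)^{(1+δ)/2}/(c₁ξ₁))·M^{1-δ/2}. Then for every integer n₀ ≥ N₀, the squares of sidelength f(n)^{-t} for n ≥ n₀ can be packed perfectly into a square of area ∑_{n=n₀}^{∞} f(n)^{-2t}. -/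
open Set MeasureTheory

/-- The axis-parallel square with lower-left corner `c` and sidelength `s`. -/
noncomputable def square (c : ℝ × ℝ) (s : ℝ) : Set (ℝ × ℝ) :=
  Set.Icc c.1 (c.1 + s) ×ˢ Set.Icc c.2 (c.2 + s)

/-- The family of sets `S i` is packed perfectly into `Ω`: the sets are contained in `Ω`,
have pairwise disjoint interiors, and cover `Ω` up to a Lebesgue-null set. -/
def PerfectlyPacked {ι : Type*} (S : ι → Set (ℝ × ℝ)) (Ω : Set (ℝ × ℝ)) : Prop :=
  (∀ i, S i ⊆ Ω) ∧
  (Pairwise fun i j => Disjoint (interior (S i)) (interior (S j))) ∧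
  volume (Ω \ ⋃ i, S i) = 0

/-!
The squares are placed greedily, in order of decreasing size, and what is left of the big square is
kept cut into rectangles. If every such rectangle had width at most `w`, their total area would be
at most `w ^ (1 - δ)` times their total weighted perimeter `∑ width ^ δ * height`. Hence, as long
as this perimeter stays below `M ^ (-1 + δ / 2) * ∑ s i ^ (1 + δ)`, summed over the indices `i < n`,
the remaining area (that of the squares still to be placed) is so large that some remaining
rectangle has width more than `M * s n`.

Along the shorter side of such a rectangle one cuts off a strip of breadth `M * s n`, and divides
the strip into pieces of comparable length. Since the sidelengths vary slowly, each piece can be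
filled with the next `≈ M ^ 2` squares in a slightly broken grid. The waste consists of `O(M)` cells
along two sides and of tiny gaps between the squares; its perimeter is `O(M)` in units of
`s n ^ (1 + δ)`, whereas the sum grows by `≈ M ^ 2` units. As `50 / M ≤ M ^ (-1 + δ / 2)`, the bound
on the perimeter is preserved. So all squares can be placed, and as their total area is that of the
big square, the packing is perfect.
-/

/-- An axis-parallel rectangle `[x₁, x₂] × [y₁, y₂]`, given by its bounding coordinates. That they
are in the right order is the separate predicate `Rect.Valid`. -/
structure Rect where
  x₁ : ℝ
  x₂ : ℝ
  y₁ : ℝ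
  y₂ : ℝ

namespace Rect

/-- The coordinates of a rectangle are in the right order. -/
def Valid (R : Rect) : Prop := R.x₁ ≤ R.x₂ ∧ R.y₁ ≤ R.y₂

/-- Rectangles are ordered by containment. -/
instance : Preorder Rect where
  le S R := R.x₁ ≤ S.x₁ ∧ S.x₂ ≤ R.x₂ ∧ R.y₁ ≤ S.y₁ ∧ S.y₂ ≤ R.y₂
  le_refl _ := ⟨le_rfl, le_rfl, le_rfl, le_rfl⟩
  le_trans _ _ _ h h' :=
    ⟨h'.1.trans h.1, h.2.1.trans h'.2.1, h'.2.2.1.trans h.2.2.1, h.2.2.2.trans h'.2.2.2⟩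

/-- Two rectangles are separated by a horizontal or vertical line. -/
def Apart (S R : Rect) : Prop := S.x₂ ≤ R.x₁ ∨ R.x₂ ≤ S.x₁ ∨ S.y₂ ≤ R.y₁ ∨ R.y₂ ≤ S.y₁

/-- The area of a rectangle. -/
def area (R : Rect) : ℝ := (R.x₂ - R.x₁) * (R.y₂ - R.y₁)

/-- The shorter sidelength of a rectangle. -/
noncomputable def width (R : Rect) : ℝ := min (R.x₂ - R.x₁) (R.y₂ - R.y₁)

/-- The longer sidelength of a rectangle. -/
noncomputable def height (R : Rect) : ℝ := max (R.x₂ - R.x₁) (R.y₂ - R.y₁)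

/-- The weighted perimeter of a rectangle, which interpolates between its longer sidelength
(`δ = 0`) and its area (`δ = 1`). -/
noncomputable def perim (δ : ℝ) (R : Rect) : ℝ := R.width ^ δ * R.height

/-- The reflection of a rectangle in the diagonal. -/
def swap (R : Rect) : Rect := ⟨R.y₁, R.y₂, R.x₁, R.x₂⟩

/-- The square with lower-left corner `c` and sidelength `s`, as a rectangle. -/
def sq (c : ℝ × ℝ) (s : ℝ) : Rect := ⟨c.1, c.1 + s, c.2, c.2 + s⟩

lemma le_iff {S R : Rect} :
    S ≤ R ↔ R.x₁ ≤ S.x₁ ∧ S.x₂ ≤ R.x₂ ∧ R.y₁ ≤ S.y₁ ∧ S.y₂ ≤ R.y₂ :=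
  Iff.rfl

lemma Apart.symm {S R : Rect} (h : S.Apart R) : R.Apart S := by
  unfold Apart at *
  tauto

lemma Apart.mono {S R S' R' : Rect} (h : S.Apart R) (hS : S' ≤ S) (hR : R' ≤ R) :
    S'.Apart R' := by
  obtain ⟨hS₁, hS₂, hS₃, hS₄⟩ := hS
  obtain ⟨hR₁, hR₂, hR₃, hR₄⟩ := hR
  exact h.imp (fun h => hS₂.trans (h.trans hR₁)) <| Or.imp (fun h => hR₂.trans (h.trans hS₁)) <|
    Or.imp (fun h => hS₄.trans (h.trans hR₃)) fun h => hR₄.trans (h.trans hS₃)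

lemma area_eq_width_mul_height (R : Rect) : R.area = R.width * R.height :=
  (min_mul_max _ _).symm

lemma Valid.width_nonneg {R : Rect} (h : R.Valid) : 0 ≤ R.width :=
  le_min (sub_nonneg.2 h.1) (sub_nonneg.2 h.2)

lemma width_le_height (R : Rect) : R.width ≤ R.height := min_le_max

lemma Valid.height_nonneg {R : Rect} (h : R.Valid) : 0 ≤ R.height :=
  h.width_nonneg.trans R.width_le_height

lemma Valid.area_nonneg {R : Rect} (h : R.Valid) : 0 ≤ R.area :=
  mul_nonneg (sub_nonneg.2 h.1) (sub_nonneg.2 h.2)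

lemma Valid.perim_le_rpow {R : Rect} (h : R.Valid) {δ a : ℝ} (hδ : 0 ≤ δ)
    (hx : R.x₂ - R.x₁ ≤ a) (hy : R.y₂ - R.y₁ ≤ a) : R.perim δ ≤ a ^ (1 + δ) := by
  have hw : R.width ≤ a := min_le_of_left_le hx
  have ha : 0 ≤ a := h.width_nonneg.trans hw
  calc R.perim δ ≤ a ^ δ * a :=
        mul_le_mul (Real.rpow_le_rpow h.width_nonneg hw hδ) (max_le hx hy) h.height_nonneg
          (by positivity)
    _ = a ^ (1 + δ) := by
        rw [Real.rpow_add' ha (by positivity), Real.rpow_one, mul_comm]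

lemma Valid.perim_mono {S R : Rect} (hS : S.Valid) (h : S ≤ R) {δ : ℝ} (hδ : 0 ≤ δ) :
    S.perim δ ≤ R.perim δ := by
  obtain ⟨h₁, h₂, h₃, h₄⟩ := h
  have hx : S.x₂ - S.x₁ ≤ R.x₂ - R.x₁ := sub_le_sub h₂ h₁
  have hy : S.y₂ - S.y₁ ≤ R.y₂ - R.y₁ := sub_le_sub h₄ h₃
  have hw : S.width ≤ R.width := min_le_min hx hy
  exact mul_le_mul (Real.rpow_le_rpow hS.width_nonneg hw hδ) (max_le_max hx hy) hS.height_nonneg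
    (Real.rpow_nonneg (hS.width_nonneg.trans hw) _)

@[simp] lemma swap_swap (R : Rect) : R.swap.swap = R := rfl

@[simp] lemma area_swap (R : Rect) : R.swap.area = R.area := mul_comm _ _

@[simp] lemma width_swap (R : Rect) : R.swap.width = R.width := min_comm _ _

@[simp] lemma height_swap (R : Rect) : R.swap.height = R.height := max_comm _ _

@[simp] lemma perim_swap (R : Rect) (δ : ℝ) : R.swap.perim δ = R.perim δ := by simp [perim]

lemma Valid.swap {R : Rect} (h : R.Valid) : R.swap.Valid := ⟨h.2, h.1⟩

lemma swap_mono {S R : Rect} (h : S ≤ R) : S.swap ≤ R.swap := ⟨h.2.2.1, h.2.2.2, h.1, h.2.1⟩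

lemma Apart.swap {S R : Rect} (h : S.Apart R) : S.swap.Apart R.swap := by
  unfold Apart Rect.swap at *
  tauto

/-- The total area of a list of rectangles. -/
def totalArea (L : List Rect) : ℝ := (L.map area).sum

/-- The total weighted perimeter of a list of rectangles. -/
noncomputable def totalPerim (δ : ℝ) (L : List Rect) : ℝ := (L.map (perim δ)).sum

/-- A list of valid rectangles with pairwise disjoint interiors. -/
def IsPacking (L : List Rect) : Prop := (∀ R ∈ L, R.Valid) ∧ L.Pairwise Apart

/-- The rectangles in `L'` are obtained from the packing `L` by cutting. The relation holds
vacuously if `L` is not a packing, so that it composes without side conditions. -/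
def CutsInto (L L' : List Rect) : Prop :=
  IsPacking L → IsPacking L' ∧ (∀ S ∈ L', ∃ R ∈ L, S ≤ R) ∧ totalArea L' = totalArea L

@[simp] lemma totalArea_append (L L' : List Rect) :
    totalArea (L ++ L') = totalArea L + totalArea L' := by simp [totalArea]

@[simp] lemma totalPerim_append (δ : ℝ) (L L' : List Rect) :
    totalPerim δ (L ++ L') = totalPerim δ L + totalPerim δ L' := by simp [totalPerim]

@[simp] lemma totalArea_singleton (R : Rect) : totalArea [R] = R.area := by simp [totalArea]

@[simp] lemma totalPerim_singleton (δ : ℝ) (R : Rect) : totalPerim δ [R] = R.perim δ := by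
  simp [totalPerim]

@[simp] lemma totalArea_map_swap (L : List Rect) : totalArea (L.map swap) = totalArea L := by
  simp [totalArea, Function.comp_def]

@[simp] lemma totalPerim_map_swap (δ : ℝ) (L : List Rect) :
    totalPerim δ (L.map swap) = totalPerim δ L := by
  simp [totalPerim, Function.comp_def]

@[simp] lemma map_swap_map_swap (L : List Rect) : (L.map swap).map swap = L := by
  simp [Function.comp_def]

lemma IsPacking.map_swap {L : List Rect} (h : IsPacking L) : IsPacking (L.map swap) :=
  ⟨List.forall_mem_map.2 fun R hR => (h.1 R hR).swap, List.pairwise_map.2 (h.2.imp Apart.swap)⟩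

lemma isPacking_append {L L' : List Rect} : IsPacking (L ++ L') ↔
    IsPacking L ∧ IsPacking L' ∧ ∀ R ∈ L, ∀ S ∈ L', R.Apart S := by
  simp only [IsPacking, List.pairwise_append, List.forall_mem_append]
  tauto

lemma IsPacking.of_append_right {L L' : List Rect} (h : IsPacking (L ++ L')) : IsPacking L' :=
  (isPacking_append.1 h).2.1

lemma IsPacking.area_le_totalArea {L : List Rect} (hL : IsPacking L) {R : Rect} (hR : R ∈ L) :
    R.area ≤ totalArea L :=
  List.single_le_sum (List.forall_mem_map.2 fun S hS => (hL.1 S hS).area_nonneg) _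
    (List.mem_map_of_mem hR)

lemma IsPacking.width_le_one {L : List Rect} (hL : IsPacking L) (harea : totalArea L ≤ 1)
    {R : Rect} (hR : R ∈ L) : R.width ≤ 1 := by
  have hle := (hL.area_le_totalArea hR).trans harea
  rw [area_eq_width_mul_height] at hle
  nlinarith [R.width_le_height]

lemma IsPacking.totalArea_le {L : List Rect} (hL : IsPacking L) {δ a : ℝ} (hδ : δ < 1)
    (ha : ∀ R ∈ L, R.width ≤ a) : totalArea L ≤ a ^ (1 - δ) * totalPerim δ L := by
  rw [totalArea, totalPerim, ← List.sum_map_mul_left]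
  refine List.sum_le_sum fun R hR => ?_
  have hw := (hL.1 R hR).width_nonneg
  rw [area_eq_width_mul_height, perim, ← mul_assoc]
  refine mul_le_mul_of_nonneg_right ?_ (hL.1 R hR).height_nonneg
  calc R.width = R.width ^ (1 - δ) * R.width ^ δ := by
        rw [← Real.rpow_add' hw (by simp), sub_add_cancel, Real.rpow_one]
    _ ≤ a ^ (1 - δ) * R.width ^ δ := by
        gcongr
        exact ha R hR

namespace CutsInto

variable {L L' L'' L₁ L₁' L₂ L₂' : List Rect}

lemma refl (L : List Rect) : CutsInto L L := fun h => ⟨h, fun S hS => ⟨S, hS, le_rfl⟩, rfl⟩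

lemma trans (h : CutsInto L L') (h' : CutsInto L' L'') : CutsInto L L'' := by
  intro hL
  obtain ⟨hL', sub, harea⟩ := h hL
  obtain ⟨hL'', sub', harea'⟩ := h' hL'
  refine ⟨hL'', fun S hS => ?_, harea'.trans harea⟩
  obtain ⟨R, hR, hSR⟩ := sub' S hS
  obtain ⟨Q, hQ, hRQ⟩ := sub R hR
  exact ⟨Q, hQ, hSR.trans hRQ⟩

lemma append (h₁ : CutsInto L₁ L₁') (h₂ : CutsInto L₂ L₂') :
    CutsInto (L₁ ++ L₂) (L₁' ++ L₂') := by
  intro h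
  obtain ⟨hL₁, hL₂, apart⟩ := isPacking_append.1 h
  obtain ⟨hL₁', sub₁, harea₁⟩ := h₁ hL₁
  obtain ⟨hL₂', sub₂, harea₂⟩ := h₂ hL₂
  refine ⟨isPacking_append.2 ⟨hL₁', hL₂', fun R hR S hS => ?_⟩,
    List.forall_mem_append.2 ⟨fun S hS => ?_, fun S hS => ?_⟩, by simp [harea₁, harea₂]⟩
  · obtain ⟨R', hR', hRR'⟩ := sub₁ R hR
    obtain ⟨S', hS', hSS'⟩ := sub₂ S hS
    exact (apart R' hR' S' hS').mono hRR' hSS'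
  · exact (sub₁ S hS).imp fun R hR => ⟨List.mem_append_left _ hR.1, hR.2⟩
  · exact (sub₂ S hS).imp fun R hR => ⟨List.mem_append_right _ hR.1, hR.2⟩

lemma of_perm (h : L.Perm L') : CutsInto L L' := fun hL =>
  ⟨⟨fun R hR => hL.1 R (h.mem_iff.2 hR), (h.pairwise_iff fun h => h.symm).1 hL.2⟩,
    fun S hS => ⟨S, h.mem_iff.2 hS, le_rfl⟩, (h.map _).sum_eq.symm⟩

lemma map_swap (h : CutsInto L L') : CutsInto (L.map swap) (L'.map swap) := by
  intro hL
  obtain ⟨hL', sub, harea⟩ := h (map_swap_map_swap L ▸ hL.map_swap)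
  refine ⟨hL'.map_swap, List.forall_mem_map.2 fun S hS => ?_, by simpa using harea⟩
  obtain ⟨R, hR, hSR⟩ := sub S hS
  exact ⟨R.swap, List.mem_map_of_mem hR, swap_mono hSR⟩

lemma vertical {R : Rect} {a : ℝ} (h₁ : R.x₁ ≤ a) (h₂ : a ≤ R.x₂) :
    CutsInto [R] [⟨R.x₁, a, R.y₁, R.y₂⟩, ⟨a, R.x₂, R.y₁, R.y₂⟩] := by
  intro hR
  have hy : R.y₁ ≤ R.y₂ := (hR.1 R (List.mem_singleton_self R)).2
  refine ⟨⟨by simp [Valid, h₁, h₂, hy], by simp [Apart]⟩, by simp [le_iff, h₁, h₂], ?_⟩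
  simp only [totalArea, area, List.map_cons, List.map_nil, List.sum_cons, List.sum_nil]
  ring

lemma horizontal {R : Rect} {a : ℝ} (h₁ : R.y₁ ≤ a) (h₂ : a ≤ R.y₂) :
    CutsInto [R] [⟨R.x₁, R.x₂, R.y₁, a⟩, ⟨R.x₁, R.x₂, a, R.y₂⟩] :=
  (vertical (R := R.swap) h₁ h₂).map_swap

end CutsInto

/-- Placing the square of sidelength `s i` at `c i`, for `n ≤ i < n'`, cuts `L` into these squares
and the rectangles in `L'`. -/
def PacksAt (s : ℕ → ℝ) (c : ℕ → ℝ × ℝ) (n n' : ℕ) (L L' : List Rect) : Prop :=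
  CutsInto L ((List.Ico n n').map (fun i => sq (c i) (s i)) ++ L')

section Packs

/-- Squares of sidelengths `s i` for `n ≤ i < n'` can be packed into `L` such that the rest can be
cut into the rectangles in `L'`. -/
def Packs (s : ℕ → ℝ) (n n' : ℕ) (L L' : List Rect) : Prop :=
  n ≤ n' ∧ ∃ c : ℕ → ℝ × ℝ, PacksAt s c n n' L L'

variable {s : ℕ → ℝ} {c c' : ℕ → ℝ × ℝ} {n n' n'' : ℕ} {L L' L'' : List Rect}

lemma PacksAt.trans (hn : n ≤ n') (hn' : n' ≤ n'') (h : PacksAt s c n n' L L')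
    (h' : PacksAt s c n' n'' L' L'') : PacksAt s c n n'' L L'' := by
  rw [PacksAt, ← List.Ico.append_consecutive hn hn', List.map_append, List.append_assoc]
  exact CutsInto.trans h ((CutsInto.refl _).append h')

lemma PacksAt.congr (hc : ∀ i, n ≤ i → i < n' → c' i = c i) (h : PacksAt s c n n' L L') :
    PacksAt s c' n n' L L' := by
  rwa [PacksAt, List.map_congr_left fun i hi => by
    rw [hc i (List.Ico.mem.1 hi).1 (List.Ico.mem.1 hi).2]]

lemma PacksAt.isPacking (hL : IsPacking L) (h : PacksAt s c n n' L L') : IsPacking L' :=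
  (h hL).1.of_append_right

lemma PacksAt.exists_sq_le (hL : IsPacking L) (h : PacksAt s c n n' L L') {i : ℕ} (hi : n ≤ i)
    (hi' : i < n') : ∃ R ∈ L, sq (c i) (s i) ≤ R :=
  (h hL).2.1 _ (List.mem_append_left _ (List.mem_map_of_mem (List.Ico.mem.2 ⟨hi, hi'⟩)))

lemma PacksAt.apart (hL : IsPacking L) (h : PacksAt s c n n' L L') {i j : ℕ} (hi : n ≤ i)
    (hi' : i < n') (hj : n ≤ j) (hj' : j < n') (hij : i ≠ j) :
    (sq (c i) (s i)).Apart (sq (c j) (s j)) :=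
  have : Std.Symm fun i j => (sq (c i) (s i)).Apart (sq (c j) (s j)) := ⟨fun _ _ h => h.symm⟩
  (List.pairwise_map.1 (isPacking_append.1 (h hL).1).1.2).forall (List.Ico.mem.2 ⟨hi, hi'⟩)
    (List.Ico.mem.2 ⟨hj, hj'⟩) hij

lemma PacksAt.totalArea_add (hL : IsPacking L) (h : PacksAt s c n n' L L') :
    totalArea L' + ∑ i ∈ Finset.Ico n n', s i ^ 2 = totalArea L := by
  have hsq : totalArea ((List.Ico n n').map fun i => sq (c i) (s i)) =
      ∑ i ∈ Finset.Ico n n', s i ^ 2 := by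
    have harea : area ∘ (fun i => sq (c i) (s i)) = fun i => s i ^ 2 := by
      ext i
      simp only [Function.comp_apply, area, sq]
      ring
    rw [totalArea, List.map_map, harea]
    rfl
  rw [← (h hL).2.2, totalArea_append, hsq, add_comm]

lemma Packs.refl (s : ℕ → ℝ) (n : ℕ) (L : List Rect) : Packs s n n L L :=
  ⟨le_rfl, fun _ => 0, by simpa [PacksAt] using CutsInto.refl L⟩

lemma Packs.trans (h : Packs s n n' L L') (h' : Packs s n' n'' L' L'') :
    Packs s n n'' L L'' := by
  obtain ⟨hn, c, hc⟩ := h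
  obtain ⟨hn', c', hc'⟩ := h'
  exact ⟨hn.trans hn', fun i => if i < n' then c i else c' i,
    .trans hn hn' (hc.congr fun i _ hi => if_pos hi) (hc'.congr fun i hi _ => if_neg hi.not_gt)⟩

lemma Packs.append_right (h : Packs s n n' L L') (F : List Rect) :
    Packs s n n' (L ++ F) (L' ++ F) := by
  obtain ⟨hn, c, hc⟩ := h
  refine ⟨hn, c, ?_⟩
  rw [PacksAt, ← List.append_assoc]
  exact CutsInto.append hc (CutsInto.refl F)

lemma CutsInto.packs (h : CutsInto L L') (h' : Packs s n n' L' L'') : Packs s n n' L L'' :=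
  h'.imp_right fun ⟨c, hc⟩ => ⟨c, h.trans hc⟩

lemma Packs.map_swap (h : Packs s n n' L L') : Packs s n n' (L.map swap) (L'.map swap) := by
  obtain ⟨hn, c, hc⟩ := h
  refine ⟨hn, fun i => (c i).swap, ?_⟩
  have hswap := CutsInto.map_swap hc
  rwa [List.map_append, List.map_map] at hswap

end Packs

/-- A subdivision of `R` into `m + 1` columns and `q + 1` rows whose grid lines are broken: in row
`j` the vertical lines have the abscissae `x 0 j ≤ x 1 j ≤ …`, and in column `i` the horizontal
lines have the ordinates `y i 0 ≤ y i 1 ≤ …`. Going upwards, the vertical lines move to the left;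
going to the right, the horizontal lines move up. -/
structure IsGrid (x y : ℕ → ℕ → ℝ) (m q : ℕ) (R : Rect) : Prop where
  x_mono : ∀ {i i' j j'}, i ≤ i' → j' ≤ j → x i j ≤ x i' j'
  y_mono : ∀ {i i' j j'}, i ≤ i' → j ≤ j' → y i j ≤ y i' j'
  left : ∀ j, x 0 j = R.x₁
  right : ∀ j, x (m + 1) j = R.x₂
  bottom : ∀ i, y i 0 = R.y₁
  top : ∀ i, y i (q + 1) = R.y₂

/-- The cell in column `p.1` and row `p.2` of a grid. -/
def cell (x y : ℕ → ℕ → ℝ) (p : ℕ × ℕ) : Rect :=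
  ⟨x p.1 p.2, x (p.1 + 1) p.2, y p.1 p.2, y p.1 (p.2 + 1)⟩

/-- The gap which the broken lines of a grid leave at the upper right corner of a cell. -/
def hole (x y : ℕ → ℕ → ℝ) (p : ℕ × ℕ) : Rect :=
  ⟨x (p.1 + 1) (p.2 + 1), x (p.1 + 1) p.2, y p.1 (p.2 + 1), y (p.1 + 1) (p.2 + 1)⟩

lemma totalArea_map_product_range (g : ℕ × ℕ → Rect) (m q : ℕ) :
    totalArea ((List.range m ×ˢ List.range q).map g) =
      ∑ j ∈ Finset.range q, ∑ i ∈ Finset.range m, (g (i, j)).area := by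
  rw [totalArea, List.map_map, ← List.sum_toFinset _ (List.nodup_range.product List.nodup_range),
    Finset.sum_comm, ← Finset.sum_product (Finset.range m) (Finset.range q) fun p => (g p).area]
  refine Finset.sum_congr ?_ fun _ _ => rfl
  ext p
  simp [← List.mem_range, ← List.mem_product]

lemma pairwise_apart_map_product_range {g : ℕ × ℕ → Rect} (m q : ℕ)
    (hrow : ∀ i k j, i < k → (g (i, j)).Apart (g (k, j)))
    (hcol : ∀ i k j l, j < l → (g (i, j)).Apart (g (k, l))) :
    ((List.range m ×ˢ List.range q).map g).Pairwise Apart := by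
  refine List.pairwise_map.2 ((List.nodup_range.product List.nodup_range).pairwise_of_forall_ne ?_)
  rintro ⟨i, j⟩ - ⟨k, l⟩ - hne
  rcases lt_trichotomy j l with hjl | rfl | hjl
  · exact hcol i k j l hjl
  · rcases lt_trichotomy i k with hik | rfl | hik
    · exact hrow i k j hik
    · exact absurd rfl hne
    · exact (hrow k i j hik).symm
  · exact (hcol k i l j hjl).symm

namespace IsGrid

variable {x y : ℕ → ℕ → ℝ} {m q : ℕ} {R : Rect}

lemma left_le (h : IsGrid x y m q R) (i j : ℕ) : R.x₁ ≤ x i j :=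
  h.left j ▸ h.x_mono (Nat.zero_le i) le_rfl

lemma le_right (h : IsGrid x y m q R) {i : ℕ} (hi : i ≤ m + 1) (j : ℕ) : x i j ≤ R.x₂ :=
  h.right j ▸ h.x_mono hi le_rfl

lemma bottom_le (h : IsGrid x y m q R) (i j : ℕ) : R.y₁ ≤ y i j :=
  h.bottom i ▸ h.y_mono le_rfl (Nat.zero_le j)

lemma le_top (h : IsGrid x y m q R) (i : ℕ) {j : ℕ} (hj : j ≤ q + 1) : y i j ≤ R.y₂ :=
  h.top i ▸ h.y_mono le_rfl hj

lemma valid_cell (h : IsGrid x y m q R) (p : ℕ × ℕ) : (cell x y p).Valid :=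
  ⟨h.x_mono (Nat.le_succ _) le_rfl, h.y_mono le_rfl (Nat.le_succ _)⟩

lemma valid_hole (h : IsGrid x y m q R) (p : ℕ × ℕ) : (hole x y p).Valid :=
  ⟨h.x_mono le_rfl (Nat.le_succ _), h.y_mono (Nat.le_succ _) le_rfl⟩

lemma cell_le (h : IsGrid x y m q R) {p : ℕ × ℕ} (hp₁ : p.1 ≤ m) (hp₂ : p.2 ≤ q) :
    cell x y p ≤ R :=
  ⟨h.left_le _ _, h.le_right (by lia) _, h.bottom_le _ _, h.le_top _ (by lia)⟩

lemma hole_le (h : IsGrid x y m q R) {p : ℕ × ℕ} (hp₁ : p.1 ≤ m) (hp₂ : p.2 ≤ q) :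
    hole x y p ≤ R :=
  ⟨h.left_le _ _, h.le_right (by lia) _, h.bottom_le _ _, h.le_top _ (by lia)⟩

lemma pairwise_apart_cell (h : IsGrid x y m q R) (m' q' : ℕ) :
    ((List.range m' ×ˢ List.range q').map (cell x y)).Pairwise Apart := by
  refine pairwise_apart_map_product_range _ _ (fun i k j hik => Or.inl (h.x_mono hik le_rfl))
    fun i k j l hjl => ?_
  rcases le_or_gt i k with hik | hki
  · exact Or.inr (Or.inr (Or.inl (h.y_mono hik hjl)))
  · exact Or.inr (Or.inl (h.x_mono hki hjl.le))

lemma pairwise_apart_hole (h : IsGrid x y m q R) (m' q' : ℕ) :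
    ((List.range m' ×ˢ List.range q').map (hole x y)).Pairwise Apart := by
  refine pairwise_apart_map_product_range _ _
    (fun i k j hik => Or.inr (Or.inr (Or.inl (h.y_mono hik le_rfl)))) fun i k j l hjl => ?_
  rcases le_or_gt k i with hki | hik
  · exact Or.inr (Or.inl (h.x_mono (by lia) hjl))
  · exact Or.inr (Or.inr (Or.inl (h.y_mono hik (by lia))))

lemma apart_cell_hole (h : IsGrid x y m q R) (p p' : ℕ × ℕ) :
    (cell x y p).Apart (hole x y p') := by
  rcases le_or_gt p.2 p'.2 with h₂ | h₂ <;> rcases le_or_gt p.1 p'.1 with h₁ | h₁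
  · exact Or.inr (Or.inr (Or.inl (h.y_mono h₁ (by lia))))
  · exact Or.inr (Or.inl (h.x_mono h₁ h₂))
  · exact Or.inl (h.x_mono (by lia) h₂)
  · exact Or.inr (Or.inr (Or.inr (h.y_mono h₁ h₂)))

-- Summation by parts turns the holes between two rows into the difference of the steps there.
lemma sum_area_cell_succ_add_sum_area_hole (h : IsGrid x y m q R) (j : ℕ) :
    ∑ i ∈ Finset.range (m + 1), (cell x y (i, j + 1)).area +
        ∑ i ∈ Finset.range m, (hole x y (i, j)).area =
      ∑ i ∈ Finset.range (m + 1), (x (i + 1) (j + 1) - x i (j + 1)) * (y i (j + 2) - R.y₁) -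
        ∑ i ∈ Finset.range (m + 1), (x (i + 1) j - x i j) * (y i (j + 1) - R.y₁) := by
  have by_parts : ∑ i ∈ Finset.range m, (hole x y (i, j)).area =
      ∑ i ∈ Finset.range (m + 1), (y i (j + 1) - R.y₁) *
        ((x i j - x i (j + 1)) - (x (i + 1) j - x (i + 1) (j + 1))) := by
    have := Finset.sum_range_by_parts (fun i => y i (j + 1) - R.y₁)
      (fun i => (x (i + 1) j - x (i + 1) (j + 1)) - (x i j - x i (j + 1))) (m + 1)
    simp only [smul_eq_mul, Finset.sum_range_sub (fun i => x i j - x i (j + 1)), h.left, h.right,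
      sub_self, mul_zero, zero_sub, sub_zero, Nat.add_sub_cancel] at this
    rw [← neg_eq_iff_eq_neg, ← Finset.sum_neg_distrib] at this
    simp only [hole, area]
    convert this.symm using 2 <;> ring
  rw [by_parts, ← Finset.sum_add_distrib, ← Finset.sum_sub_distrib]
  refine Finset.sum_congr rfl fun i _ => ?_
  simp only [cell, area]
  ring

lemma totalArea_eq (h : IsGrid x y m q R) :
    totalArea ((List.range (m + 1) ×ˢ List.range (q + 1)).map (cell x y) ++
      (List.range m ×ˢ List.range q).map (hole x y)) = R.area := by
  have first_row : ∑ i ∈ Finset.range (m + 1), (cell x y (i, 0)).area =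
      ∑ i ∈ Finset.range (m + 1), (x (i + 1) 0 - x i 0) * (y i 1 - R.y₁) := by
    simp [cell, area, h.bottom]
  have last_row : ∑ i ∈ Finset.range (m + 1), (x (i + 1) q - x i q) * (y i (q + 1) - R.y₁) =
      R.area := by
    simp_rw [h.top, ← Finset.sum_mul, Finset.sum_range_sub (x · q), h.left, h.right, area]
  rw [totalArea_append, totalArea_map_product_range, totalArea_map_product_range,
    Finset.sum_range_succ', add_right_comm, ← Finset.sum_add_distrib,
    Finset.sum_congr rfl fun j _ => h.sum_area_cell_succ_add_sum_area_hole j,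
    Finset.sum_range_sub (fun j => ∑ i ∈ Finset.range (m + 1),
      (x (i + 1) j - x i j) * (y i (j + 1) - R.y₁)), last_row, first_row]
  ring

lemma cutsInto (h : IsGrid x y m q R) :
    CutsInto [R] ((List.range (m + 1) ×ˢ List.range (q + 1)).map (cell x y) ++
      (List.range m ×ˢ List.range q).map (hole x y)) := by
  refine fun _ => ⟨isPacking_append.2 ⟨⟨?_, h.pairwise_apart_cell _ _⟩,
    ⟨?_, h.pairwise_apart_hole _ _⟩, ?_⟩, ?_, by simpa using h.totalArea_eq⟩
  · exact List.forall_mem_map.2 fun p _ => h.valid_cell p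
  · exact List.forall_mem_map.2 fun p _ => h.valid_hole p
  · exact List.forall_mem_map.2 fun p _ => List.forall_mem_map.2 fun p' _ => h.apart_cell_hole p p'
  · refine List.forall_mem_append.2 ⟨List.forall_mem_map.2 fun p hp => ⟨R, by simp, ?_⟩,
      List.forall_mem_map.2 fun p hp => ⟨R, by simp, ?_⟩⟩ <;>
      rw [List.mem_product, List.mem_range, List.mem_range] at hp
    · exact h.cell_le (by lia) (by lia)
    · exact h.hole_le (by lia) (by lia)

end IsGrid

/-- The indices of the cells in the last column and in the last row of a grid. -/
def border (m q : ℕ) : List (ℕ × ℕ) :=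
  (List.range (q + 1)).map (fun j => (m, j)) ++ (List.range m).map fun i => (i, q)

lemma length_border (m q : ℕ) : (border m q).length = m + q + 1 := by
  simp only [border, List.length_append, List.length_map, List.length_range]
  lia

lemma range_succ_product_range_succ_perm (m q : ℕ) :
    (List.range (m + 1) ×ˢ List.range (q + 1)).Perm
      (List.range m ×ˢ List.range q ++ border m q) := by
  refine (List.perm_ext_iff_of_nodup (List.nodup_range.product List.nodup_range) ?_).2 ?_
  · refine (List.nodup_range.product List.nodup_range).append ((List.nodup_range.map ?_).append
      (List.nodup_range.map ?_) ?_) ?_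
    · exact fun _ _ h => (Prod.mk.inj h).2
    · exact fun _ _ h => (Prod.mk.inj h).1
    all_goals
      simp only [List.disjoint_left, border, List.mem_append, List.mem_product, List.mem_map,
        List.mem_range, Prod.forall, Prod.mk.injEq]
      lia
  · simp only [border, List.mem_append, List.mem_product, List.mem_map, List.mem_range,
      Prod.forall, Prod.mk.injEq, ↓existsAndEq]
    lia

-- The cells are enumerated row by row, each row from right to left.
lemma range_product_range_perm {m : ℕ} (hm : 0 < m) (q : ℕ) :
    (List.range m ×ˢ List.range q).Perm
      ((List.range (m * q)).map fun k => (m - 1 - k % m, k / m)) := by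
  refine (List.perm_ext_iff_of_nodup (List.nodup_range.product List.nodup_range)
    (List.nodup_range.map fun a b h => ?_)).2 fun ⟨i, j⟩ => ?_
  · have ha := Nat.mod_lt a hm
    have hb := Nat.mod_lt b hm
    have hmod : a % m = b % m := by
      have := (Prod.mk.inj h).1
      lia
    rw [← Nat.div_add_mod a m, ← Nat.div_add_mod b m, hmod, (Prod.mk.inj h).2]
  · simp only [List.mem_product, List.mem_map, List.mem_range, Prod.mk.injEq]
    constructor
    · rintro ⟨hi, hj⟩
      have hlt : m - 1 - i < m := by lia
      refine ⟨m * j + (m - 1 - i), ?_, ?_, ?_⟩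
      · calc m * j + (m - 1 - i) < m * (j + 1) := by rw [Nat.mul_add_one]; lia
          _ ≤ m * q := Nat.mul_le_mul_left m hj
      · rw [Nat.mul_add_mod, Nat.mod_eq_of_lt hlt]
        lia
      · rw [Nat.mul_add_div hm, Nat.div_eq_of_lt hlt, add_zero]
    · rintro ⟨k, hk, rfl, rfl⟩
      exact ⟨by lia, Nat.div_lt_of_lt_mul hk⟩

lemma totalPerim_map_le {ι : Type*} {L : List ι} {g : ι → Rect} {δ a : ℝ} (hδ : 0 ≤ δ)
    (hg : ∀ p ∈ L, (g p).Valid ∧ (g p).x₂ - (g p).x₁ ≤ a ∧ (g p).y₂ - (g p).y₁ ≤ a) :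
    totalPerim δ (L.map g) ≤ L.length * a ^ (1 + δ) := by
  have h := List.sum_le_card_nsmul ((L.map g).map (perim δ)) (a ^ (1 + δ)) <| by
    simp only [List.map_map, List.forall_mem_map]
    exact fun p hp => (hg p hp).1.perim_le_rpow hδ (hg p hp).2.1 (hg p hp).2.2
  simpa [totalPerim, nsmul_eq_mul] using h

namespace IsGrid

variable {x y : ℕ → ℕ → ℝ} {m q : ℕ} {R : Rect}

lemma packs (h : IsGrid x y m q R) {s : ℕ → ℝ} {n : ℕ} (hm : 0 < m)
    (hx : ∀ i < m, ∀ j < q, x (i + 1) j - x i j = s (m * j + (m - 1 - i) + n))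
    (hy : ∀ i < m, ∀ j < q, y i (j + 1) - y i j = s (m * j + (m - 1 - i) + n)) :
    Packs s n (n + m * q) [R] ((border m q).map (cell x y) ++
      (List.range m ×ˢ List.range q).map (hole x y)) := by
  have hperm := (((range_succ_product_range_succ_perm m q).trans
    ((range_product_range_perm hm q).append_right _)).map (cell x y)).append_right
      ((List.range m ×ˢ List.range q).map (hole x y))
  rw [List.map_append, List.map_map, List.append_assoc] at hperm
  let p : ℕ → ℕ × ℕ := fun k => (m - 1 - k % m, k / m)
  have hsquare : (List.range (m * q)).map (cell x y ∘ p) = (List.Ico n (n + m * q)).map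
      fun k => sq (x (p (k - n)).1 (p (k - n)).2, y (p (k - n)).1 (p (k - n)).2) (s k) := by
    have hIco : List.Ico n (n + m * q) = (List.range (m * q)).map (n + ·) := by
      rw [← List.Ico.zero_bot, List.Ico.map_add, zero_add, add_comm n]
    rw [hIco, List.map_map]
    refine List.map_congr_left fun k hk => ?_
    have hcol : k % m < m := Nat.mod_lt _ hm
    have hrow : k / m < q := Nat.div_lt_of_lt_mul (List.mem_range.1 hk)
    have hindex : m * (k / m) + (m - 1 - (m - 1 - k % m)) = k := by
      rw [show m - 1 - (m - 1 - k % m) = k % m by lia, Nat.div_add_mod]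
    have hxk := hx (m - 1 - k % m) (by lia) (k / m) hrow
    have hyk := hy (m - 1 - k % m) (by lia) (k / m) hrow
    rw [hindex, sub_eq_iff_eq_add', add_comm k n] at hxk hyk
    simp [p, cell, sq, hxk, hyk]
  exact ⟨Nat.le_add_right _ _, _, h.cutsInto.trans (CutsInto.of_perm (hsquare ▸ hperm))⟩

lemma totalPerim_le (h : IsGrid x y m q R) {δ a b : ℝ} (hδ : 0 ≤ δ)
    (hx : ∀ i ≤ m, ∀ j ≤ q, x (i + 1) j - x i j ≤ a)
    (hy : ∀ i ≤ m, ∀ j ≤ q, y i (j + 1) - y i j ≤ a)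
    (hx' : ∀ i ≤ m, ∀ j < q, x i j - x i (j + 1) ≤ b)
    (hy' : ∀ i < m, ∀ j ≤ q, y (i + 1) j - y i j ≤ b) :
    totalPerim δ ((border m q).map (cell x y) ++
        (List.range m ×ˢ List.range q).map (hole x y)) ≤
      (m + q + 1) * a ^ (1 + δ) + m * q * b ^ (1 + δ) := by
  rw [totalPerim_append]
  refine add_le_add
    ((totalPerim_map_le (a := a) hδ fun p hp => ⟨h.valid_cell p, ?_⟩).trans_eq
      (by simp [length_border]))
    ((totalPerim_map_le (a := b) hδ fun p hp => ⟨h.valid_hole p, ?_⟩).trans_eq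
      (by simp [List.length_product]))
  · have hmem := (range_succ_product_range_succ_perm m q).mem_iff.2 (List.mem_append_right _ hp)
    rw [List.mem_product, List.mem_range, List.mem_range, Nat.lt_succ_iff, Nat.lt_succ_iff] at hmem
    exact ⟨hx _ hmem.1 _ hmem.2, hy _ hmem.1 _ hmem.2⟩
  · rw [List.mem_product, List.mem_range, List.mem_range] at hp
    exact ⟨hx' _ hp.1 _ hp.2, hy' _ hp.1 _ hp.2⟩

end IsGrid

/-- The endpoints of `m` consecutive intervals of lengths `g 0, …, g (m - 1)` starting at `lo`,
followed by the endpoint `hi`. -/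
noncomputable def ruler (lo hi : ℝ) (g : ℕ → ℝ) (m i : ℕ) : ℝ :=
  if i ≤ m then lo + ∑ a ∈ Finset.range i, g a else hi

section Ruler

variable {lo hi σ η : ℝ} {g g' : ℕ → ℝ} {m i i' : ℕ}

lemma ruler_of_le (hi' : i ≤ m) : ruler lo hi g m i = lo + ∑ a ∈ Finset.range i, g a :=
  if_pos hi'

lemma ruler_of_lt (hi' : m < i) : ruler lo hi g m i = hi := if_neg hi'.not_ge

lemma ruler_succ_sub (hi' : i < m) : ruler lo hi g m (i + 1) - ruler lo hi g m i = g i := by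
  rw [ruler_of_le hi', ruler_of_le hi'.le, Finset.sum_range_succ]
  ring

lemma ruler_mono (hg : ∀ a, 0 ≤ g a) (hgg' : ∀ a, g a ≤ g' a)
    (hsum : ∑ a ∈ Finset.range m, g a ≤ hi - lo) (hii' : i ≤ i') :
    ruler lo hi g m i ≤ ruler lo hi g' m i' := by
  have hsub {k l : ℕ} (hkl : k ≤ l) : ∑ a ∈ Finset.range k, g a ≤ ∑ a ∈ Finset.range l, g a :=
    Finset.sum_le_sum_of_subset_of_nonneg (by simpa using hkl) fun a _ _ => hg a
  rcases le_or_gt i m with him | him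
  · rcases le_or_gt i' m with him' | him'
    · rw [ruler_of_le him, ruler_of_le him']
      exact add_le_add le_rfl ((hsub hii').trans (Finset.sum_le_sum fun a _ => hgg' a))
    · rw [ruler_of_le him, ruler_of_lt him']
      linarith [hsub him]
  · rw [ruler_of_lt him, ruler_of_lt (him.trans_le hii')]

lemma ruler_succ_sub_le (hσ : 0 ≤ σ) (hg : ∀ a, g a ≤ σ) (hg' : ∀ a, σ - η ≤ g a)
    (hη : m * η ≤ σ) (hlen : hi - lo ≤ (m + 1) * σ) (him : i ≤ m) :
    ruler lo hi g m (i + 1) - ruler lo hi g m i ≤ 2 * σ := by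
  rcases him.lt_or_eq with him | rfl
  · rw [ruler_succ_sub him]
    linarith [hg i]
  · have hsum : i * (σ - η) ≤ ∑ a ∈ Finset.range i, g a := by
      simpa using Finset.card_nsmul_le_sum (Finset.range i) g (σ - η) fun a _ => hg' a
    rw [ruler_of_lt (Nat.lt_succ_self i), ruler_of_le le_rfl]
    linarith

lemma ruler_sub_ruler_le (hη : 0 ≤ η) (hgg' : ∀ a, g' a - g a ≤ η) (him : i ≤ m) :
    ruler lo hi g' m i - ruler lo hi g m i ≤ m * η := by
  rw [ruler_of_le him, ruler_of_le him, add_sub_add_left_eq_sub, ← Finset.sum_sub_distrib]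
  calc ∑ a ∈ Finset.range i, (g' a - g a) ≤ i * η := by
        simpa using Finset.sum_le_card_nsmul (Finset.range i) _ η fun a _ => hgg' a
    _ ≤ m * η := by gcongr

lemma isGrid_ruler {r : ℕ → ℕ → ℝ} {q : ℕ} {R : Rect} (hr : ∀ i j, 0 ≤ r i j)
    (hrσ : ∀ i j, r i j ≤ σ) (hcol : ∀ j, Monotone fun i => r i j) (hrow : ∀ i, Antitone (r i))
    (hW : m * σ ≤ R.x₂ - R.x₁) (hH : q * σ ≤ R.y₂ - R.y₁) :
    IsGrid (fun i j => ruler R.x₁ R.x₂ (fun a => r a j) m i)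
      (fun i j => ruler R.y₁ R.y₂ (r i) q j) m q R where
  left j := by simp [ruler]
  right j := ruler_of_lt (Nat.lt_succ_self m)
  bottom i := by simp [ruler]
  top i := ruler_of_lt (Nat.lt_succ_self q)
  x_mono := fun hi hj => ruler_mono (fun a => hr a _) (fun a => hrow a hj)
    (le_trans (by simpa using Finset.sum_le_card_nsmul (Finset.range m) _ σ fun a _ => hrσ a _)
      hW) hi
  y_mono := fun hi hj => ruler_mono (hr _) (fun a => hcol a hi)
    (le_trans (by simpa using Finset.sum_le_card_nsmul (Finset.range q) _ σ fun b _ => hrσ _ b)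
      hH) hj

end Ruler

lemma exists_packs_grid {s : ℕ → ℝ} {n m q : ℕ} {R : Rect} {δ η B : ℝ} (hm : 0 < m) (hδ : 0 ≤ δ)
    (hs : AntitoneOn s (Ici n)) (hs₀ : ∀ i, n ≤ i → 0 ≤ s i)
    (hη : ∀ i, n ≤ i → i < n + m * (q + 1) → s n - η ≤ s i) (hmB : m * η ≤ B) (hqB : q * η ≤ B)
    (hB : B ≤ s n) (hW : m * s n ≤ R.x₂ - R.x₁) (hW' : R.x₂ - R.x₁ ≤ (m + 1) * s n)
    (hH : q * s n ≤ R.y₂ - R.y₁) (hH' : R.y₂ - R.y₁ ≤ (q + 1) * s n) :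
    ∃ L', Packs s n (n + m * q) [R] L' ∧
      totalPerim δ L' ≤ (m + q + 1) * (2 * s n) ^ (1 + δ) + m * q * B ^ (1 + δ) := by
  -- capping the row index at `q` makes the bounds below uniform
  let r : ℕ → ℕ → ℝ := fun i j => s (m * min j q + (m - 1 - i) + n)
  have hr₀ (i j) : 0 ≤ r i j := hs₀ _ (Nat.le_add_left _ _)
  have hr_le (i j) : r i j ≤ s n :=
    hs self_mem_Ici (Nat.le_add_left _ _) (Nat.le_add_left _ _)
  have hr_ge (i j) : s n - η ≤ r i j := by
    refine hη _ (Nat.le_add_left _ _) ?_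
    have := Nat.mul_le_mul_left m (min_le_right j q)
    rw [Nat.mul_add_one]
    lia
  have hη₀ : 0 ≤ η := by linarith [hr_le 0 0, hr_ge 0 0]
  have hcol (j) : Monotone fun i => r i j := fun i i' hi =>
    hs (Nat.le_add_left _ _) (Nat.le_add_left _ _) (by lia)
  have hrow (i) : Antitone (r i) := fun j j' hj => hs (Nat.le_add_left _ _) (Nat.le_add_left _ _)
    (by have := Nat.mul_le_mul_left m (min_le_min_right q hj); lia)
  have hgrid := isGrid_ruler hr₀ hr_le hcol hrow hW hH
  have hr_sub (i j i' j') : r i j - r i' j' ≤ η := by linarith [hr_le i j, hr_ge i' j']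
  refine ⟨_, hgrid.packs hm (fun i hi j hj => ?_) fun i _ j hj => ?_, hgrid.totalPerim_le hδ
    (fun i hi j _ => ruler_succ_sub_le (hs₀ n le_rfl) (fun a => hr_le a j) (fun a => hr_ge a j)
      (hmB.trans hB) hW' hi)
    (fun i _ j hj => ruler_succ_sub_le (hs₀ n le_rfl) (hr_le i) (hr_ge i) (hqB.trans hB) hH' hj)
    (fun i hi j _ => (ruler_sub_ruler_le hη₀ (fun a => hr_sub a j a (j + 1)) hi).trans hmB)
    fun i _ j hj => (ruler_sub_ruler_le hη₀ (fun b => hr_sub _ b _ b) hj).trans hqB⟩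
  · rw [ruler_succ_sub hi]
    simp only [r, min_eq_left hj.le]
  · rw [ruler_succ_sub hj]
    simp only [r, min_eq_left hj.le]

end Rect

open Rect

/-- The numbers `s i` for `i ≥ n` are positive, decreasing, and nearly constant over stretches of
`9 * M ^ 2` indices. Squares with such sidelengths can be packed efficiently in grids of roughly
`M × M` squares. -/
structure SlowlyDecreasing (s : ℕ → ℝ) (n M : ℕ) : Prop where
  antitoneOn : AntitoneOn s (Ici n)
  pos : ∀ i, n ≤ i → 0 < s i
  slow : ∀ k i, n ≤ k → k ≤ i → i ≤ k + 9 * M ^ 2 → s k * (1 - 1 / (528 * M ^ 2)) ≤ s i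

lemma SlowlyDecreasing.mono {s : ℕ → ℝ} {n n' M : ℕ} (hs : SlowlyDecreasing s n M)
    (hn : n ≤ n') : SlowlyDecreasing s n' M where
  antitoneOn := hs.antitoneOn.mono (Ici_subset_Ici.2 hn)
  pos i hi := hs.pos i (hn.trans hi)
  slow k i hk := hs.slow k i (hn.trans hk)

lemma exists_nat_mul_le_lt {a w : ℝ} (ha : 0 < a) (hw : 0 ≤ w) :
    ∃ m : ℕ, m * a ≤ w ∧ w < (m + 1) * a :=
  ⟨⌊w / a⌋₊, (le_div_iff₀ ha).1 (Nat.floor_le (by positivity)),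
    (div_lt_iff₀ ha).1 (Nat.lt_floor_add_one _)⟩

lemma exists_nat_mul_eq {a w : ℝ} (ha : 0 < a) (haw : a ≤ w) :
    ∃ k : ℕ, 1 ≤ k ∧ ∃ b, a ≤ b ∧ b ≤ 2 * a ∧ k * b = w := by
  obtain ⟨k, hk, hk'⟩ := exists_nat_mul_le_lt ha (ha.le.trans haw)
  have hk₁ : 1 ≤ k := by
    by_contra! h
    simp [Nat.lt_one_iff.1 h, haw.not_gt] at hk'
  have hk₁' : (1 : ℝ) ≤ k := by exact_mod_cast hk₁
  have hk₀ : (0 : ℝ) < k := by linarith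
  refine ⟨k, hk₁, w / k, by rwa [le_div_iff₀ hk₀, mul_comm], ?_, mul_div_cancel₀ _ hk₀.ne'⟩
  rw [div_le_iff₀ hk₀]
  nlinarith

section Grid

variable {s : ℕ → ℝ} {n M : ℕ} {δ : ℝ}

lemma grid_cost_le {m q b σ : ℝ} (hb : 1 ≤ b) (hσ : 0 ≤ σ) (hδ : 0 ≤ δ) (hδ' : δ ≤ 1)
    (hm : m ≤ 5 / 2 * b) (hq : q ≤ 5 / 2 * b) (hmq : m * q ≤ 6 * b ^ 2) :
    (m + q + 1) * (2 * σ) ^ (1 + δ) + m * q * (5 / (1056 * b) * σ) ^ (1 + δ) ≤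
      25 * b * σ ^ (1 + δ) := by
  have hcell : (2 * σ) ^ (1 + δ) ≤ 4 * σ ^ (1 + δ) := by
    rw [Real.mul_rpow (by norm_num) hσ]
    gcongr
    calc (2 : ℝ) ^ (1 + δ) ≤ 2 ^ (2 : ℝ) :=
          Real.rpow_le_rpow_of_exponent_le (by norm_num) (by linarith)
      _ = 4 := by norm_num
  have hhole : (5 / (1056 * b) * σ) ^ (1 + δ) ≤ 5 / (1056 * b) * σ ^ (1 + δ) := by
    rw [Real.mul_rpow (by positivity) hσ]
    gcongr
    refine Real.rpow_le_self_of_le_one (by positivity) ?_ (by linarith)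
    rw [div_le_one (by positivity)]
    linarith
  calc (m + q + 1) * (2 * σ) ^ (1 + δ) + m * q * (5 / (1056 * b) * σ) ^ (1 + δ)
      ≤ (5 * b + 1) * (4 * σ ^ (1 + δ)) + 6 * b ^ 2 * (5 / (1056 * b) * σ ^ (1 + δ)) := by
        gcongr
        linarith
    _ = ((20 + 30 / 1056) * b + 4) * σ ^ (1 + δ) := by
        field_simp
        ring
    _ ≤ 25 * b * σ ^ (1 + δ) := by
        gcongr
        linarith

lemma SlowlyDecreasing.le_sum_rpow (hs : SlowlyDecreasing s n M) (hM : 0 < M) (hδ : 0 ≤ δ)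
    (hδ' : δ ≤ 1) {N : ℕ} (hN : M ^ 2 ≤ N) (hN' : N ≤ 9 * M ^ 2) :
    M ^ 2 / 2 * s n ^ (1 + δ) ≤ ∑ i ∈ Finset.Ico n (n + N), s i ^ (1 + δ) := by
  have hσ : 0 < s n := hs.pos n le_rfl
  have hM' : (1 : ℝ) ≤ M := by exact_mod_cast hM
  have hε : 1 / (528 * (M : ℝ) ^ 2) ≤ 1 / 528 :=
    one_div_le_one_div_of_le (by norm_num) (by nlinarith)
  have hhalf : (1 / 2 : ℝ) ≤ (1 - 1 / (528 * M ^ 2)) ^ (1 + δ) :=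
    calc (1 / 2 : ℝ) ≤ (527 / 528) ^ (2 : ℝ) := by norm_num
      _ ≤ (1 - 1 / (528 * M ^ 2)) ^ (2 : ℝ) := by gcongr; linarith
      _ ≤ (1 - 1 / (528 * M ^ 2)) ^ (1 + δ) :=
        Real.rpow_le_rpow_of_exponent_ge (by linarith) (by simp) (by linarith)
  have hterm : ∀ i ∈ Finset.Ico n (n + N), 1 / 2 * s n ^ (1 + δ) ≤ s i ^ (1 + δ) := by
    intro i hi
    rw [Finset.mem_Ico] at hi
    calc 1 / 2 * s n ^ (1 + δ) ≤ (1 - 1 / (528 * M ^ 2)) ^ (1 + δ) * s n ^ (1 + δ) := by gcongr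
      _ = (s n * (1 - 1 / (528 * M ^ 2))) ^ (1 + δ) := by
          rw [Real.mul_rpow hσ.le (by linarith), mul_comm]
      _ ≤ s i ^ (1 + δ) := Real.rpow_le_rpow (mul_nonneg hσ.le (by linarith))
          (hs.slow n i le_rfl hi.1 (by lia)) (by linarith)
  calc M ^ 2 / 2 * s n ^ (1 + δ) ≤ N * (1 / 2 * s n ^ (1 + δ)) := by
        rw [div_mul_eq_mul_div, mul_div_assoc, ← one_div_mul_eq_div]
        gcongr
        exact_mod_cast hN
    _ ≤ ∑ i ∈ Finset.Ico n (n + N), s i ^ (1 + δ) := by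
        simpa using Finset.card_nsmul_le_sum _ _ _ hterm

lemma exists_count {a σ w : ℝ} (ha : 0 < a) (haσ : a ≤ σ) (hσ : σ ≤ 5 / 4 * a)
    (hw : M * σ ≤ w) (hw' : w ≤ 2 * (M * σ)) :
    ∃ m : ℕ, M ≤ m ∧ (m : ℝ) ≤ 5 / 2 * M ∧ m * a ≤ w ∧ w ≤ (m + 1) * a := by
  obtain ⟨m, hmw, hwm⟩ := exists_nat_mul_le_lt ha (by nlinarith : 0 ≤ w)
  have hMm : (M : ℝ) * a < (m + 1) * a := by nlinarith
  refine ⟨m, Nat.lt_succ_iff.1 ?_, ?_, hmw, hwm.le⟩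
  · exact_mod_cast lt_of_mul_lt_mul_right hMm ha.le
  · exact le_of_mul_le_mul_right (by nlinarith : (m : ℝ) * a ≤ 5 / 2 * M * a) ha

lemma mul_le_six_mul_sq {m q b a σ : ℝ} (ha : 0 < a) (hq₀ : 0 ≤ q) (hbσ : 0 ≤ b * σ)
    (hm : m * a ≤ 2 * (b * σ)) (hq : q * a ≤ 2 * (b * σ))
    (hσ : σ ^ 2 ≤ 3 / 2 * a ^ 2) : m * q ≤ 6 * b ^ 2 := by
  refine le_of_mul_le_mul_right ?_ (pow_pos ha 2)
  calc m * q * a ^ 2 = (m * a) * (q * a) := by ring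
    _ ≤ (2 * (b * σ)) * (2 * (b * σ)) := by gcongr
    _ = 4 * b ^ 2 * σ ^ 2 := by ring
    _ ≤ 4 * b ^ 2 * (3 / 2 * a ^ 2) := by gcongr
    _ = 6 * b ^ 2 * a ^ 2 := by ring

lemma SlowlyDecreasing.exists_packs_piece (hs : SlowlyDecreasing s n M) (hM : 0 < M) (hδ : 0 ≤ δ)
    (hδ' : δ ≤ 1) {σ : ℝ} (hσ : s n ≤ σ) (hσ' : σ ^ 2 ≤ 3 / 2 * s n ^ 2) {R : Rect}
    (hW : M * σ ≤ R.x₂ - R.x₁) (hW' : R.x₂ - R.x₁ ≤ 2 * (M * σ))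
    (hH : M * σ ≤ R.y₂ - R.y₁) (hH' : R.y₂ - R.y₁ ≤ 2 * (M * σ)) :
    ∃ n' L', n < n' ∧ n' ≤ n + 6 * M ^ 2 ∧ Packs s n n' [R] L' ∧
      totalPerim δ L' ≤ 50 / M * ∑ i ∈ Finset.Ico n n', s i ^ (1 + δ) := by
  have hsn : 0 < s n := hs.pos n le_rfl
  have hM' : (1 : ℝ) ≤ M := by exact_mod_cast hM
  have hσ_le : σ ≤ 5 / 4 * s n := by nlinarith
  obtain ⟨m, hm, hm', hmW, hWm⟩ := exists_count hsn hσ hσ_le hW hW'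
  obtain ⟨q, hq, hq', hqH, hHq⟩ := exists_count hsn hσ hσ_le hH hH'
  have hmq : (m * q : ℝ) ≤ 6 * M ^ 2 := mul_le_six_mul_sq hsn q.cast_nonneg
    (by nlinarith) (hmW.trans hW') (hqH.trans hH') hσ'
  have hmq_nat : m * q ≤ 6 * M ^ 2 := by exact_mod_cast hmq
  have hm_nat : m ≤ 3 * M ^ 2 := by exact_mod_cast (by nlinarith : (m : ℝ) ≤ 3 * M ^ 2)
  have hMM : M ^ 2 ≤ m * q := (pow_two M).trans_le (Nat.mul_le_mul hm hq)
  have hdrift {k : ℕ} (hk : (k : ℝ) ≤ 5 / 2 * M) :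
      k * (s n * (1 / (528 * M ^ 2))) ≤ 5 / (1056 * M) * s n :=
    calc k * (s n * (1 / (528 * M ^ 2))) ≤ 5 / 2 * M * (s n * (1 / (528 * M ^ 2))) := by gcongr
      _ = 5 / (1056 * M) * s n := by
          field_simp
          norm_num
  have hB : 5 / (1056 * M) * s n ≤ s n :=
    mul_le_of_le_one_left hsn.le (by rw [div_le_one (by positivity)]; linarith)
  obtain ⟨L', hL', hperim⟩ := exists_packs_grid (R := R) (by lia : 0 < m) hδ hs.antitoneOn
    (fun i hi => (hs.pos i hi).le)
    (fun i hi hi' => by linarith [hs.slow n i le_rfl hi (by rw [Nat.mul_add_one] at hi'; lia)])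
    (hdrift hm') (hdrift hq') hB hmW hWm hqH hHq
  refine ⟨n + m * q, L', by have := pow_pos hM 2; lia, by lia, hL', ?_⟩
  calc totalPerim δ L' ≤ 25 * M * s n ^ (1 + δ) :=
        hperim.trans (grid_cost_le hM' hsn.le hδ hδ' hm' hq' hmq)
    _ = 50 / M * (M ^ 2 / 2 * s n ^ (1 + δ)) := by
        field_simp
        norm_num
    _ ≤ 50 / M * ∑ i ∈ Finset.Ico n (n + m * q), s i ^ (1 + δ) := by
        gcongr
        exact hs.le_sum_rpow hM hδ hδ' hMM (by lia)

lemma SlowlyDecreasing.exists_packs_strip {a N : ℕ} (hs : SlowlyDecreasing s a M) (hM : 0 < M)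
    (hδ : 0 ≤ δ) (hδ' : δ ≤ 1) (hsq : ∀ i, a ≤ i → i ≤ N → s a ^ 2 ≤ 3 / 2 * s i ^ 2) {w : ℝ}
    (hw : M * s a ≤ w) (hw' : w ≤ 2 * (M * s a)) {k : ℕ} (hk : 1 ≤ k) (han : a ≤ n)
    (hnN : n + 6 * M ^ 2 * k ≤ N) {R : Rect} (hW : k * w = R.x₂ - R.x₁)
    (hH : M * s a ≤ R.y₂ - R.y₁) (hH' : R.y₂ - R.y₁ ≤ 2 * (M * s a)) :
    ∃ n' L', n < n' ∧ Packs s n n' [R] L' ∧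
      totalPerim δ L' ≤ 50 / M * ∑ i ∈ Finset.Ico n n', s i ^ (1 + δ) := by
  have piece {n : ℕ} (han : a ≤ n) (hnN : n ≤ N) {S : Rect} :=
    (hs.mono han).exists_packs_piece (R := S) hM hδ hδ'
      (hs.antitoneOn self_mem_Ici han han) (hsq n han hnN)
  induction k, hk using Nat.le_induction generalizing n R with
  | base =>
    rw [Nat.cast_one, one_mul] at hW
    obtain ⟨n', L', hnn', -, hL', hperim⟩ := piece han (by lia) (hW ▸ hw) (hW ▸ hw') hH hH'
    exact ⟨n', L', hnn', hL', hperim⟩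
  | succ k _ ih =>
    rw [Nat.mul_add_one] at hnN
    rw [Nat.cast_succ, add_one_mul] at hW
    have hw₀ : 0 ≤ w := (mul_nonneg M.cast_nonneg (hs.pos a le_rfl).le).trans hw
    have hkw : 0 ≤ k * w := by positivity
    obtain ⟨n', L', hnn', hn', hL', hperim⟩ := piece (S := ⟨R.x₁, R.x₁ + w, R.y₁, R.y₂⟩) han
      (by lia) (by simpa using hw) (by simpa using hw') hH hH'
    obtain ⟨n'', L'', hnn'', hL'', hperim'⟩ := ih (R := ⟨R.x₁ + w, R.x₂, R.y₁, R.y₂⟩)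
      (han.trans hnn'.le) (by lia) (by dsimp only; linarith) hH hH'
    refine ⟨n'', L'' ++ L', hnn'.trans hnn'', ?_, ?_⟩
    · exact (CutsInto.vertical (by linarith) (by linarith)).packs <|
        (hL'.append_right [⟨R.x₁ + w, R.x₂, R.y₁, R.y₂⟩]).trans <|
        (CutsInto.of_perm List.perm_append_comm).packs (hL''.append_right L')
    · rw [totalPerim_append, ← Finset.sum_Ico_consecutive _ hnn'.le hnn''.le, mul_add]
      linarith

lemma SlowlyDecreasing.exists_packs_of_le_width {N : ℕ} (hs : SlowlyDecreasing s n M)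
    (hM : 0 < M) (hδ : 0 ≤ δ) (hδ' : δ ≤ 1)
    (hsq : ∀ i, n ≤ i → i ≤ N → s n ^ 2 ≤ 3 / 2 * s i ^ 2) (hN : n + 6 * M / s n ≤ N) {R : Rect}
    (hR : R.Valid) (hwide : M * s n ≤ R.width) (hwidth : R.width ≤ 1) :
    ∃ n' L', n < n' ∧ Packs s n n' [R] L' ∧
      totalPerim δ L' ≤ R.perim δ + 50 / M * ∑ i ∈ Finset.Ico n n', s i ^ (1 + δ) := by
  wlog hWH : R.x₂ - R.x₁ ≤ R.y₂ - R.y₁ generalizing R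
  · obtain ⟨n', L', hnn', hL', hperim⟩ :=
      this hR.swap (by simpa using hwide) (by simpa using hwidth) (le_of_not_ge hWH)
    exact ⟨n', L'.map swap, hnn', hL'.map_swap, by simpa using hperim⟩
  have hsn : 0 < s n := hs.pos n le_rfl
  have hb : 0 < M * s n := by positivity
  rw [width, min_eq_left hWH] at hwide hwidth
  obtain ⟨k, hk, w, hw, hw', hkw⟩ := exists_nat_mul_eq hb hwide
  have hkN : n + 6 * M ^ 2 * k ≤ N := by
    have : (n + 6 * M ^ 2 * k : ℝ) ≤ N := by
      refine le_trans (add_le_add le_rfl ?_) hN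
      rw [le_div_iff₀ hsn]
      calc 6 * (M : ℝ) ^ 2 * k * s n = 6 * M * (k * (M * s n)) := by ring
        _ ≤ 6 * M * (k * w) := by gcongr
        _ ≤ 6 * M := mul_le_of_le_one_right (by positivity) (hkw.trans_le hwidth)
    exact_mod_cast this
  let S : Rect := ⟨R.x₁, R.x₂, R.y₁ + M * s n, R.y₂⟩
  obtain ⟨n', L', hnn', hL', hperim⟩ := hs.exists_packs_strip hM hδ hδ' hsq hw hw' hk le_rfl hkN
    (R := ⟨R.x₁, R.x₂, R.y₁, R.y₁ + M * s n⟩) hkw (by linarith) (by linarith)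
  refine ⟨n', L' ++ [S], hnn', (CutsInto.horizontal (by linarith) (by linarith)).packs
    (hL'.append_right [S]), ?_⟩
  have hS : S.Valid := ⟨hR.1, by dsimp only [S]; linarith⟩
  have hSR : S ≤ R := ⟨le_rfl, le_rfl, by dsimp only [S]; linarith, le_rfl⟩
  rw [totalPerim_append, totalPerim_singleton]
  linarith [hS.perim_mono hSR hδ]

end Grid

lemma SlowlyDecreasing.exists_packs {s : ℕ → ℝ} {n N M : ℕ} {δ : ℝ} (hs : SlowlyDecreasing s n M)
    (hM : 0 < M) (hδ : 0 ≤ δ) (hδ' : δ < 1)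
    (hsq : ∀ i, n ≤ i → i ≤ N → s n ^ 2 ≤ 3 / 2 * s i ^ 2) (hN : n + 6 * M / s n ≤ N)
    {L : List Rect} (hL : IsPacking L) (harea : totalArea L ≤ 1)
    (hwide : (M * s n) ^ (1 - δ) * totalPerim δ L < totalArea L) :
    ∃ n' L', n < n' ∧ Packs s n n' L L' ∧
      totalPerim δ L' ≤ totalPerim δ L + 50 / M * ∑ i ∈ Finset.Ico n n', s i ^ (1 + δ) := by
  obtain ⟨R, hR, hRwide⟩ : ∃ R ∈ L, M * s n < R.width := by
    by_contra! h
    exact hwide.not_ge (hL.totalArea_le hδ' h)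
  obtain ⟨n', L', hnn', hL', hperim⟩ := hs.exists_packs_of_le_width hM hδ hδ'.le hsq hN
    (hL.1 R hR) hRwide.le (hL.width_le_one harea hR)
  obtain ⟨L₁, L₂, rfl⟩ := List.append_of_mem hR
  refine ⟨n', L' ++ (L₁ ++ L₂), hnn', (CutsInto.of_perm List.perm_middle).packs
    (hL'.append_right (L₁ ++ L₂)), ?_⟩
  rw [← List.singleton_append, totalPerim_append, totalPerim_append, totalPerim_append,
    totalPerim_append, totalPerim_singleton]
  linarith

lemma exists_seq_of_forall_exists {α : Type*} {P : α → Prop} {r : α → α → Prop} {a : α}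
    (ha : P a) (h : ∀ a, P a → ∃ b, P b ∧ r a b) :
    ∃ u : ℕ → α, u 0 = a ∧ ∀ k, r (u k) (u (k + 1)) := by
  have : Nonempty α := ⟨a⟩
  choose! g hP hr using h
  have hu (k : ℕ) : P (g^[k] a) := by
    induction k with
    | zero => exact ha
    | succ k ih => simpa only [Function.iterate_succ_apply'] using hP _ ih
  refine ⟨fun k => g^[k] a, rfl, fun k => ?_⟩
  simpa only [Function.iterate_succ_apply'] using hr _ (hu k)

lemma exists_eq_on_Ico {α : Type*} {n : ℕ → ℕ} (hn : StrictMono n) (g : ℕ → ℕ → α) :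
    ∃ h : ℕ → α, ∀ k i, n k ≤ i → i < n (k + 1) → h i = g k i := by
  refine ⟨fun i => g (Nat.findGreatest (n · ≤ i) i) i, fun k i hki hik => ?_⟩
  have hk : Nat.findGreatest (n · ≤ i) i = k := Nat.findGreatest_eq_iff.2
    ⟨(hn.le_apply).trans hki, fun _ => hki, fun l hkl _ hl =>
      (hik.trans_le (hn.monotone hkl)).not_ge hl⟩
  simp only [hk]

lemma exists_packsAt_of_forall_exists {s : ℕ → ℝ} {n₀ : ℕ} {L₀ : List Rect}
    {P : ℕ → List Rect → Prop} (h₀ : P n₀ L₀)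
    (step : ∀ n L, P n L → ∃ n' L', n < n' ∧ Packs s n n' L L' ∧ P n' L') :
    ∃ c : ℕ → ℝ × ℝ, ∀ i, ∃ n' L', i < n' ∧ PacksAt s c n₀ n' L₀ L' := by
  obtain ⟨u, hu₀, hu⟩ := exists_seq_of_forall_exists (a := (n₀, L₀))
    (P := fun p : ℕ × List Rect => P p.1 p.2)
    (r := fun p q => p.1 < q.1 ∧ Packs s p.1 q.1 p.2 q.2) h₀ fun p hp =>
      let ⟨n', L', hlt, hpacks, h'⟩ := step p.1 p.2 hp
      ⟨(n', L'), h', hlt, hpacks⟩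
  choose hlt _ c hc using hu
  have hmono : StrictMono fun k => (u k).1 := strictMono_nat_of_lt_succ hlt
  obtain ⟨c', hc'⟩ := exists_eq_on_Ico hmono c
  have hn₀ (k : ℕ) : n₀ ≤ (u k).1 :=
    (congrArg Prod.fst hu₀).symm.trans_le (hmono.monotone k.zero_le)
  have hpacks (k : ℕ) : PacksAt s c' n₀ (u k).1 L₀ (u k).2 := by
    induction k with
    | zero => simpa [hu₀, PacksAt] using CutsInto.refl L₀
    | succ k ih => exact ih.trans (hn₀ k) (hlt k).le ((hc k).congr (hc' k))
  exact ⟨c', fun i => ⟨_, _, (hmono.le_apply (x := i)).trans_lt (hlt i), hpacks (i + 1)⟩⟩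

lemma measurableSet_square (c : ℝ × ℝ) (a : ℝ) : MeasurableSet (square c a) :=
  measurableSet_Icc.prod measurableSet_Icc

lemma interior_square (c : ℝ × ℝ) (a : ℝ) :
    interior (square c a) = Ioo c.1 (c.1 + a) ×ˢ Ioo c.2 (c.2 + a) := by
  rw [square, interior_prod_eq, interior_Icc, interior_Icc]

lemma volume_square (c : ℝ × ℝ) {a : ℝ} (ha : 0 ≤ a) :
    volume (square c a) = ENNReal.ofReal (a ^ 2) := by
  rw [square, Measure.volume_eq_prod, Measure.prod_prod, Real.volume_Icc, Real.volume_Icc,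
    add_sub_cancel_left, add_sub_cancel_left, ← ENNReal.ofReal_mul ha, pow_two]

lemma volume_interior_square (c : ℝ × ℝ) {a : ℝ} (ha : 0 ≤ a) :
    volume (interior (square c a)) = ENNReal.ofReal (a ^ 2) := by
  simp [interior_square, Measure.volume_eq_prod, ← ENNReal.ofReal_mul ha, pow_two]

lemma square_subset_square {c d : ℝ × ℝ} {a b : ℝ} (h : Rect.sq c a ≤ Rect.sq d b) :
    square c a ⊆ square d b :=
  prod_mono (Icc_subset_Icc h.1 h.2.1) (Icc_subset_Icc h.2.2.1 h.2.2.2)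

lemma disjoint_interior_square {c d : ℝ × ℝ} {a b : ℝ} (h : (Rect.sq c a).Apart (Rect.sq d b)) :
    Disjoint (interior (square c a)) (interior (square d b)) := by
  rw [interior_square, interior_square, disjoint_prod, Ioo_disjoint_Ioo, Ioo_disjoint_Ioo]
  simp only [min_le_iff, le_max_iff]
  unfold Apart Rect.sq at h
  tauto

lemma perfectlyPacked_of_volume_le {ι : Type*} [Countable ι] {S : ι → Set (ℝ × ℝ)}
    {Ω : Set (ℝ × ℝ)} (hS : ∀ i, MeasurableSet (S i)) (hsub : ∀ i, S i ⊆ Ω)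
    (hdisj : Pairwise fun i j => Disjoint (interior (S i)) (interior (S j)))
    (hΩ : volume Ω ≠ ⊤) (hvol : volume Ω ≤ ∑' i, volume (interior (S i))) :
    PerfectlyPacked S Ω := by
  refine ⟨hsub, hdisj, ?_⟩
  have hunion : ⋃ i, S i ⊆ Ω := iUnion_subset hsub
  rw [measure_sdiff hunion (MeasurableSet.iUnion hS).nullMeasurableSet
    (measure_ne_top_of_subset hunion hΩ), tsub_eq_zero_iff_le]
  calc volume Ω ≤ ∑' i, volume (interior (S i)) := hvol
    _ = volume (⋃ i, interior (S i)) :=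
        (measure_iUnion hdisj fun i => isOpen_interior.measurableSet).symm
    _ ≤ volume (⋃ i, S i) := measure_mono (iUnion_mono fun i => interior_subset)

lemma perfectlyPacked_square {ι : Type*} [Countable ι] {s : ι → ℝ} {pos : ι → ℝ × ℝ}
    {c : ℝ × ℝ} {a : ℝ} (hs : ∀ i, 0 ≤ s i) (ha : 0 ≤ a) (hsum : HasSum (fun i => s i ^ 2) (a ^ 2))
    (hle : ∀ i, Rect.sq (pos i) (s i) ≤ Rect.sq c a)
    (hapart : Pairwise fun i j => (Rect.sq (pos i) (s i)).Apart (Rect.sq (pos j) (s j))) :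
    PerfectlyPacked (fun i => square (pos i) (s i)) (square c a) := by
  refine perfectlyPacked_of_volume_le (fun i => measurableSet_square _ _)
    (fun i => square_subset_square (hle i)) (fun i j hij => disjoint_interior_square (hapart hij))
    (by simp [volume_square c ha]) ?_
  simp_rw [volume_square c ha, volume_interior_square _ (hs _)]
  rw [← hsum.tsum_eq, ENNReal.ofReal_tsum_of_nonneg (fun i => sq_nonneg _) hsum.summable]

lemma summable_subtype_le_iff {E : Type*} [AddCommGroup E] [TopologicalSpace E]
    [IsTopologicalAddGroup E] {g : ℕ → E} (n : ℕ) :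
    (Summable fun i : {m : ℕ // n ≤ m} => g i) ↔ Summable g := by
  have h := (finite_Iio n).summable_compl_iff (f := g)
  rwa [compl_Iio] at h

lemma sum_Ico_add_tsum_subtype_le {E : Type*} [AddCommGroup E] [TopologicalSpace E]
    [IsTopologicalAddGroup E] [T2Space E] {g : ℕ → E} (hg : Summable g) {n n' : ℕ} (h : n ≤ n') :
    ∑ i ∈ Finset.Ico n n', g i + ∑' i : {m : ℕ // n' ≤ m}, g i =
      ∑' i : {m : ℕ // n ≤ m}, g i := by
  have hdisj : Disjoint (Ico n n') (Ici n') := disjoint_left.2 fun i hi => hi.2.not_ge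
  have hunion := Summable.tsum_union_disjoint hdisj ((finite_Ico n n').summable g)
    ((summable_subtype_le_iff n').2 hg)
  rw [Ico_union_Ici_eq_Ici h, ← Finset.coe_Ico, Finset.tsum_subtype'] at hunion
  exact hunion.symm

/-- The rectangles in `L` can be what is left of a rectangle after placing the squares of
sidelength `s i` with `i < n`: they have the total area of the remaining squares, and their total
weighted perimeter is controlled by the squares already placed. -/
structure IsRemainder (s : ℕ → ℝ) (δ θ : ℝ) (n : ℕ) (L : List Rect) : Prop where
  isPacking : IsPacking L
  totalArea_eq : totalArea L = ∑' i : {m : ℕ // n ≤ m}, s i ^ 2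
  totalPerim_le : totalPerim δ L ≤ θ * ∑ i ∈ Finset.Ico 1 n, s i ^ (1 + δ)

lemma isRemainder_sq {s : ℕ → ℝ} {δ θ : ℝ} {n : ℕ} (c : ℝ × ℝ) (hδ : 0 ≤ δ)
    (hstart : (∑' i : {m : ℕ // n ≤ m}, s i ^ 2) ^ ((1 + δ) / 2) ≤
      θ * ∑ i ∈ Finset.Ico 1 n, s i ^ (1 + δ)) :
    IsRemainder s δ θ n [Rect.sq c √(∑' i : {m : ℕ // n ≤ m}, s i ^ 2)] := by
  set A := ∑' i : {m : ℕ // n ≤ m}, s i ^ 2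
  have hA : 0 ≤ A := tsum_nonneg fun i => sq_nonneg _
  have hvalid : (Rect.sq c √A).Valid := by simp [Valid, Rect.sq]
  refine ⟨⟨by simpa using hvalid, List.pairwise_singleton _ _⟩, ?_, le_trans ?_ hstart⟩
  · change totalArea _ = A
    simp [area, Rect.sq, Real.mul_self_sqrt hA]
  · rw [totalPerim_singleton, Real.rpow_div_two_eq_sqrt _ hA]
    exact hvalid.perim_le_rpow hδ (add_sub_cancel_left _ _).le (add_sub_cancel_left _ _).le

lemma IsRemainder.exists_packs {s : ℕ → ℝ} {n N M : ℕ} {δ θ : ℝ} {L : List Rect}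
    (h : IsRemainder s δ θ n L) (hn : 1 ≤ n) (hs : SlowlyDecreasing s n M) (hM : 0 < M)
    (hδ : 0 ≤ δ) (hδ' : δ < 1) (hθ : 50 / M ≤ θ) (hN : n + 6 * M / s n ≤ N)
    (hsq : ∀ i, n ≤ i → i ≤ N → s n ^ 2 ≤ 3 / 2 * s i ^ 2) (hsum : Summable fun i => s i ^ 2)
    (harea : ∑' i : {m : ℕ // n ≤ m}, s i ^ 2 ≤ 1)
    (hwide : (M * s n) ^ (1 - δ) * (θ * ∑ i ∈ Finset.Ico 1 n, s i ^ (1 + δ)) <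
      ∑' i : {m : ℕ // n ≤ m}, s i ^ 2) :
    ∃ n' L', n < n' ∧ Packs s n n' L L' ∧ IsRemainder s δ θ n' L' := by
  obtain ⟨hL, hA, hP⟩ := h
  have hsn : 0 < s n := hs.pos n le_rfl
  have hL_wide : (M * s n) ^ (1 - δ) * totalPerim δ L < totalArea L := by
    rw [hA]
    refine lt_of_le_of_lt ?_ hwide
    gcongr
  obtain ⟨n', L', hnn', hpacks, hperim⟩ :=
    hs.exists_packs hM hδ hδ' hsq hN hL (hA.trans_le harea) hL_wide
  refine ⟨n', L', hnn', hpacks, ?_⟩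
  obtain ⟨-, c, hc⟩ := hpacks
  refine ⟨hc.isPacking hL, ?_, ?_⟩
  · linarith [hc.totalArea_add hL, sum_Ico_add_tsum_subtype_le hsum hnn'.le]
  · have hsum_nonneg : 0 ≤ ∑ i ∈ Finset.Ico n n', s i ^ (1 + δ) :=
      Finset.sum_nonneg fun i hi =>
        Real.rpow_nonneg (hs.pos i (Finset.mem_Ico.1 hi).1).le _
    rw [← Finset.sum_Ico_consecutive _ hn hnn'.le, mul_add]
    linarith [mul_le_mul_of_nonneg_right hθ hsum_nonneg]

lemma SlowlyDecreasing.exists_perfectlyPacked {s : ℕ → ℝ} {n₀ M : ℕ} {δ θ : ℝ}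
    (hs : SlowlyDecreasing s n₀ M) (hn₀ : 1 ≤ n₀) (hM : 0 < M) (hδ : 0 ≤ δ) (hδ' : δ < 1)
    (hθ : 50 / M ≤ θ)
    (hsq : ∀ n, n₀ ≤ n → ∃ N : ℕ, n + 6 * M / s n ≤ N ∧
      ∀ i, n ≤ i → i ≤ N → s n ^ 2 ≤ 3 / 2 * s i ^ 2)
    (hsum : Summable fun i => s i ^ 2) (harea : ∑' i : {m : ℕ // n₀ ≤ m}, s i ^ 2 ≤ 1)
    (hwide : ∀ n, n₀ ≤ n → (M * s n) ^ (1 - δ) * (θ * ∑ i ∈ Finset.Ico 1 n, s i ^ (1 + δ)) <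
      ∑' i : {m : ℕ // n ≤ m}, s i ^ 2)
    (hstart : (∑' i : {m : ℕ // n₀ ≤ m}, s i ^ 2) ^ ((1 + δ) / 2) ≤
      θ * ∑ i ∈ Finset.Ico 1 n₀, s i ^ (1 + δ)) (c : ℝ × ℝ) :
    ∃ pos : {m : ℕ // n₀ ≤ m} → ℝ × ℝ,
      PerfectlyPacked (fun i : {m : ℕ // n₀ ≤ m} => square (pos i) (s i))
        (square c √(∑' i : {m : ℕ // n₀ ≤ m}, s i ^ 2)) := by
  have hinitial := isRemainder_sq (θ := θ) c hδ hstart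
  have harea_le {n : ℕ} (hn : n₀ ≤ n) : ∑' i : {m : ℕ // n ≤ m}, s i ^ 2 ≤ 1 := by
    have : 0 ≤ ∑ i ∈ Finset.Ico n₀ n, s i ^ 2 := Finset.sum_nonneg fun i _ => sq_nonneg _
    linarith [sum_Ico_add_tsum_subtype_le hsum hn]
  obtain ⟨pos, hpos⟩ := exists_packsAt_of_forall_exists
    (P := fun n L => n₀ ≤ n ∧ IsRemainder s δ θ n L) ⟨le_rfl, hinitial⟩ fun n L ⟨hn, hL⟩ =>
      let ⟨N, hN, hsqN⟩ := hsq n hn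
      let ⟨n', L', hnn', hpacks, hL'⟩ := hL.exists_packs (hn₀.trans hn) (hs.mono hn) hM hδ hδ' hθ hN
        hsqN hsum (harea_le hn) (hwide n hn)
      ⟨n', L', hnn', hpacks, hn.trans hnn'.le, hL'⟩
  refine ⟨fun i => pos i, perfectlyPacked_square (fun i => (hs.pos i i.2).le) (Real.sqrt_nonneg _)
    ?_ (fun i => ?_) fun i j hij => ?_⟩
  · rw [Real.sq_sqrt (tsum_nonneg fun i => sq_nonneg _)]
    exact ((summable_subtype_le_iff n₀).2 hsum).hasSum
  · obtain ⟨n', L', hi, hpacks⟩ := hpos i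
    simpa using hpacks.exists_sq_le hinitial.isPacking i.2 hi
  · obtain ⟨n', L', hn', hpacks⟩ := hpos (max i j)
    exact hpacks.apart hinitial.isPacking i.2 ((le_max_left _ _).trans_lt hn') j.2
      ((le_max_right _ _).trans_lt hn') (Subtype.coe_ne_coe.2 hij)

lemma rpow_neg_le_inv_mul_rpow_neg {a b c t : ℝ} (hb : 0 < b) (hc : 0 < c) (hc' : c ≤ 1)
    (ht : 0 ≤ t) (ht' : t ≤ 1) (h : c * b ≤ a) : a ^ (-t) ≤ c⁻¹ * b ^ (-t) :=
  calc a ^ (-t) ≤ (c * b) ^ (-t) :=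
        Real.rpow_le_rpow_of_nonpos (mul_pos hc hb) h (neg_nonpos.2 ht)
    _ = c ^ (-t) * b ^ (-t) := Real.mul_rpow hc.le hb.le
    _ ≤ c ^ (-1 : ℝ) * b ^ (-t) := by
        gcongr ?_ * _
        exact Real.rpow_le_rpow_of_exponent_ge hc hc' (neg_le_neg ht')
    _ = c⁻¹ * b ^ (-t) := by rw [Real.rpow_neg_one]

lemma sub_le_mul_sub_of_derivWithin_Ici_le {f : ℝ → ℝ} {a x y C : ℝ}
    (hf : DifferentiableOn ℝ f (Ici a)) (hax : a ≤ x) (hxy : x ≤ y)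
    (hC : ∀ z ∈ Icc x y, derivWithin f (Ici a) z ≤ C) : f y - f x ≤ C * (y - x) := by
  have hsub : Icc x y ⊆ Ici a := fun z hz => hax.trans hz.1
  refine (convex_Icc x y).image_sub_le_mul_sub_of_deriv_le (hf.continuousOn.mono hsub)
    (hf.mono (interior_subset.trans hsub)) (fun z hz => ?_) x (left_mem_Icc.2 hxy) y
    (right_mem_Icc.2 hxy) hxy
  rw [interior_Icc] at hz
  rw [← derivWithin_of_mem_nhds (Ici_mem_nhds (hax.trans_lt hz.1))]
  exact hC z (Ioo_subset_Icc_self hz)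

lemma one_sub_mul_le_of_derivWithin_Ici_le {f : ℝ → ℝ} {k i M : ℕ} (hk : 1 ≤ k) (hM : 0 < M)
    (hki : k ≤ i) (hi : i ≤ k + 9 * M ^ 2) (hf : DifferentiableOn ℝ f (Ici 1))
    (hmono : MonotoneOn f (Ici 1)) (hfk : 0 ≤ f k)
    (hderiv : ∀ x ∈ Icc (k : ℝ) (k + 9 * M ^ 2),
      derivWithin f (Ici 1) x ≤ 1 / 4752 * ((M : ℝ) ^ 4)⁻¹ * f k) :
    (1 - 1 / (528 * M ^ 2)) * f i ≤ f k := by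
  have hk' : (1 : ℝ) ≤ k := Nat.one_le_cast.2 hk
  have hki' : (k : ℝ) ≤ i := Nat.cast_le.2 hki
  have hi' : (i : ℝ) ≤ k + 9 * M ^ 2 := by exact_mod_cast hi
  have hgrowth : f i - f k ≤ 1 / (528 * M ^ 2) * f i :=
    calc f i - f k ≤ 1 / 4752 * ((M : ℝ) ^ 4)⁻¹ * f k * (i - k) :=
          sub_le_mul_sub_of_derivWithin_Ici_le hf hk' hki' fun z hz =>
            hderiv z ⟨hz.1, hz.2.trans hi'⟩
      _ ≤ 1 / 4752 * ((M : ℝ) ^ 4)⁻¹ * f k * (9 * M ^ 2) := by gcongr; linarith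
      _ = 1 / (528 * M ^ 2) * f k := by field_simp; ring
      _ ≤ 1 / (528 * M ^ 2) * f i := by gcongr; exact hmono hk' (hk'.trans hki') hki'
  linarith

lemma slowlyDecreasing_rpow_neg {f : ℝ → ℝ} {t : ℝ} {n M : ℕ} (hn : 1 ≤ n) (hM : 0 < M)
    (ht : 0 ≤ t) (ht' : t ≤ 1) (hf : DifferentiableOn ℝ f (Ici 1)) (hmono : MonotoneOn f (Ici 1))
    (hpos : ∀ x, 1 ≤ x → 0 < f x)
    (hderiv : ∀ k : ℕ, n ≤ k → ∀ x ∈ Icc (k : ℝ) (k + 9 * M ^ 2),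
      derivWithin f (Ici 1) x ≤ 1 / 4752 * ((M : ℝ) ^ 4)⁻¹ * f k) :
    SlowlyDecreasing (fun i : ℕ => f i ^ (-t)) n M := by
  have hone {i : ℕ} (hi : n ≤ i) : (1 : ℝ) ≤ i := Nat.one_le_cast.2 (hn.trans hi)
  refine ⟨fun i hi j hj hij => ?_, fun i hi => Real.rpow_pos_of_pos (hpos i (hone hi)) _,
    fun k i hk hki hi => ?_⟩
  · exact Real.rpow_le_rpow_of_nonpos (hpos i (hone hi))
      (hmono (hone hi) (hone hj) (Nat.cast_le.2 hij)) (neg_nonpos.2 ht)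
  · have hε : (0 : ℝ) < 1 - 1 / (528 * M ^ 2) := by
      have hM' : (1 : ℝ) ≤ M ^ 2 := one_le_pow₀ (Nat.one_le_cast.2 hM)
      rw [sub_pos, div_lt_one (by positivity)]
      linarith
    rw [← le_div_iff₀ hε, div_eq_inv_mul]
    exact rpow_neg_le_inv_mul_rpow_neg (hpos i (hone (hk.trans hki))) hε
      (sub_le_self _ (by positivity)) ht ht'
      (one_sub_mul_le_of_derivWithin_Ici_le (hn.trans hk) hM hki hi hf hmono
        (hpos k (hone hk)).le (hderiv k hk))

lemma exists_forall_rpow_neg_sq_le {f : ℝ → ℝ} {t K l : ℝ} {n M : ℕ} (hn : 1 ≤ n) (hM : 0 < M)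
    (ht : 0 ≤ t) (ht' : t ≤ 1) (hmono : MonotoneOn f (Ici 1)) (hpos : ∀ x, 1 ≤ x → 0 < f x)
    (hK : √(2 / 3) ≤ K) (hK' : K ≤ 1) (hratio : K * f ((1 + l) * n) ≤ f n)
    (hl : 9 * M * f n ^ t ≤ l * n) (hone : f n ^ (-t) ≤ 1) :
    ∃ N : ℕ, n + 6 * M / f n ^ (-t) ≤ N ∧
      ∀ i : ℕ, n ≤ i → i ≤ N → (f n ^ (-t)) ^ 2 ≤ 3 / 2 * (f i ^ (-t)) ^ 2 := by
  have hn' : (1 : ℝ) ≤ n := Nat.one_le_cast.2 hn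
  have hfn : 0 < f n := hpos n hn'
  have hK₀ : 0 < K := (Real.sqrt_pos.2 (by norm_num)).trans_le hK
  refine ⟨⌊(1 + l) * n⌋₊, ?_, fun i hni hi => ?_⟩
  · have hMf : 1 ≤ M * f n ^ t := by
      refine one_le_mul_of_one_le_of_one_le (Nat.one_le_cast.2 hM) ?_
      rwa [Real.rpow_neg hfn.le, inv_le_one₀ (Real.rpow_pos_of_pos hfn _)] at hone
    rw [Real.rpow_neg hfn.le, div_inv_eq_mul]
    linarith [Nat.lt_floor_add_one ((1 + l) * n)]
  · have hi' : (i : ℝ) ≤ (1 + l) * n := (Nat.le_floor_iff' (by lia)).1 hi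
    have hi₁ : (1 : ℝ) ≤ i := hn'.trans (Nat.cast_le.2 hni)
    have hKi : K * f i ≤ f n :=
      (mul_le_mul_of_nonneg_left (hmono hi₁ (hi₁.trans hi') hi') hK₀.le).trans hratio
    calc (f n ^ (-t)) ^ 2 ≤ (K⁻¹ * f i ^ (-t)) ^ 2 := by
          gcongr
          exact rpow_neg_le_inv_mul_rpow_neg (hpos i hi₁) hK₀ hK' ht ht' hKi
      _ = (K ^ 2)⁻¹ * (f i ^ (-t)) ^ 2 := by rw [mul_pow, inv_pow]
      _ ≤ 3 / 2 * (f i ^ (-t)) ^ 2 := by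
          gcongr
          rw [inv_le_comm₀ (by positivity) (by norm_num)]
          linarith [(Real.sqrt_le_left hK₀.le).1 hK]

lemma rpow_neg_sq {x : ℝ} (hx : 0 ≤ x) (t : ℝ) : (x ^ (-t)) ^ 2 = x ^ (-(2 * t)) := by
  rw [← Real.rpow_mul_natCast hx, Nat.cast_ofNat, neg_mul, mul_comm t]

lemma tsum_rpow_neg_sq {f : ℝ → ℝ} (hf : ∀ x, 1 ≤ x → 0 ≤ f x) (t : ℝ) {n : ℕ} (hn : 1 ≤ n) :
    ∑' i : {m : ℕ // n ≤ m}, (f (i : ℕ) ^ (-t)) ^ 2 =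
      ∑' i : {m : ℕ // n ≤ m}, f (i : ℕ) ^ (-(2 * t)) :=
  tsum_congr fun i => rpow_neg_sq (hf _ (Nat.one_le_cast.2 (hn.trans i.2))) t

lemma sum_rpow_neg_rpow {f : ℝ → ℝ} (hf : ∀ x, 1 ≤ x → 0 ≤ f x) (t δ : ℝ) (n : ℕ) :
    ∑ i ∈ Finset.Ico 1 n, (f i ^ (-t)) ^ (1 + δ) =
      ∑ i ∈ Finset.Icc 1 (n - 1), f i ^ (-(t + δ * t)) := by
  have hIco : Finset.Icc 1 (n - 1) = Finset.Ico 1 n := by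
    ext i
    simp only [Finset.mem_Icc, Finset.mem_Ico]
    lia
  rw [hIco]
  refine Finset.sum_congr rfl fun i hi => ?_
  rw [← Real.rpow_mul (hf i (Nat.one_le_cast.2 (Finset.mem_Ico.1 hi).1))]
  congr 1
  ring

lemma mul_rpow_neg_rpow_mul_rpow {M x : ℝ} (hM : 0 < M) (hx : 0 < x) (t δ : ℝ) :
    (M * x ^ (-t)) ^ (1 - δ) * M ^ (-1 + δ / 2) = (M ^ (δ / 2) * x ^ ((1 - δ) * t))⁻¹ :=
  calc (M * x ^ (-t)) ^ (1 - δ) * M ^ (-1 + δ / 2)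
      = M ^ (1 - δ) * M ^ (-1 + δ / 2) * (x ^ (-t)) ^ (1 - δ) := by
        rw [Real.mul_rpow hM.le (Real.rpow_nonneg hx.le _)]
        ring
    _ = M ^ (-(δ / 2)) * x ^ (-((1 - δ) * t)) := by
        rw [← Real.rpow_add hM, ← Real.rpow_mul hx.le]
        ring_nf
    _ = (M ^ (δ / 2) * x ^ ((1 - δ) * t))⁻¹ := by
        rw [Real.rpow_neg hM.le, Real.rpow_neg hx.le, mul_inv]

lemma le_one_of_mul_le_of_monotoneOn {f : ℝ → ℝ} {K l x : ℝ} (hf : MonotoneOn f (Ici 1))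
    (hx : 1 ≤ x) (hl : 0 ≤ l) (hfx : 0 < f x) (h : K * f ((1 + l) * x) ≤ f x) : K ≤ 1 := by
  have hle : x ≤ (1 + l) * x := le_mul_of_one_le_left (by linarith) (by linarith)
  have hfle : f x ≤ f ((1 + l) * x) := hf hx (hx.trans hle) hle
  exact le_of_mul_le_mul_right (by linarith : K * f ((1 + l) * x) ≤ 1 * f ((1 + l) * x))
    (hfx.trans_le hfle)

lemma pos_of_lt_rpow {x r : ℝ} {M : ℕ} (hx : 0 ≤ x) (hr : 0 < r) (h : x < (M : ℝ) ^ r) :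
    0 < M := by
  refine Nat.pos_of_ne_zero ?_
  rintro rfl
  rw [Nat.cast_zero, Real.zero_rpow hr.ne'] at h
  exact hx.not_gt h

theorem perfect_packing_of_sidelengths_f_pow_neg_t_general {f : ℝ → ℝ} {t δ K l : ℝ} {M n₀ : ℕ}
    (ht : 0 < t) (ht' : t ≤ 1) (hδ : 0 < δ) (hδ' : δ < 1) (hn₀ : 1 ≤ n₀)
    (hM : 50 ≤ (M : ℝ) ^ (δ / 2)) (hK : √(2 / 3) ≤ K)
    (hf : DifferentiableOn ℝ f (Ici 1)) (hmono : MonotoneOn f (Ici 1))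
    (hpos : ∀ x, 1 ≤ x → 0 < f x)
    (hsum : Summable fun n : ℕ => f n ^ (-(2 * t)))
    (hratio : ∀ n : ℕ, n₀ ≤ n → K * f ((1 + l) * n) ≤ f n)
    (hl : ∀ n : ℕ, n₀ ≤ n → 9 * M * f n ^ t ≤ l * n)
    (hderiv : ∀ n : ℕ, n₀ ≤ n → ∀ x ∈ Icc (n : ℝ) (n + 9 * M ^ 2),
      derivWithin f (Ici 1) x ≤ 1 / 4752 * ((M : ℝ) ^ 4)⁻¹ * f n)
    (hwide : ∀ n : ℕ, n₀ ≤ n → ∑ i ∈ Finset.Icc 1 (n - 1), f i ^ (-(t + δ * t)) <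
      M ^ (δ / 2) * f n ^ ((1 - δ) * t) * ∑' i : {i : ℕ // n ≤ i}, f (i : ℕ) ^ (-(2 * t)))
    (harea : ∑' i : {i : ℕ // n₀ ≤ i}, f (i : ℕ) ^ (-(2 * t)) ≤ 1)
    (hstart : M ^ (1 - δ / 2) *
        (∑' i : {i : ℕ // n₀ ≤ i}, f (i : ℕ) ^ (-(2 * t))) ^ ((1 + δ) / 2) ≤
      ∑ i ∈ Finset.Icc 1 (n₀ - 1), f i ^ (-(t + δ * t)))
    (c : ℝ × ℝ) :
    ∃ pos : {n : ℕ // n₀ ≤ n} → ℝ × ℝ,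
      PerfectlyPacked (fun n : {n : ℕ // n₀ ≤ n} => square (pos n) (f (n : ℕ) ^ (-t)))
        (square c √(∑' n : {n : ℕ // n₀ ≤ n}, f (n : ℕ) ^ (-(2 * t)))) := by
  have hM₀ : 0 < M := pos_of_lt_rpow le_rfl (half_pos hδ) (by linarith)
  have hM₀' : (0 : ℝ) < M := Nat.cast_pos.2 hM₀
  have hone {n : ℕ} (hn : n₀ ≤ n) : (1 : ℝ) ≤ n := Nat.one_le_cast.2 (hn₀.trans hn)
  have hnonneg (x : ℝ) (hx : 1 ≤ x) : 0 ≤ f x := (hpos x hx).le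
  have hs := slowlyDecreasing_rpow_neg hn₀ hM₀ ht.le ht' hf hmono hpos hderiv
  have hsq : Summable fun i : {i : ℕ // n₀ ≤ i} => (f (i : ℕ) ^ (-t)) ^ 2 :=
    ((summable_subtype_le_iff n₀).2 hsum).congr fun i => (rpow_neg_sq (hnonneg _ (hone i.2)) t).symm
  rw [← tsum_rpow_neg_sq hnonneg t hn₀] at harea hstart ⊢
  refine hs.exists_perfectlyPacked (θ := (M : ℝ) ^ (-1 + δ / 2)) hn₀ hM₀ hδ.le hδ' ?_
    (fun n hn => ?_) ((summable_subtype_le_iff n₀).1 hsq) harea (fun n hn => ?_) ?_ c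
  · rw [Real.rpow_add hM₀', Real.rpow_neg_one, div_eq_inv_mul]
    gcongr
  · have hln : 0 < l * n := by
      have := Real.rpow_pos_of_pos (hpos n (hone hn)) t
      exact lt_of_lt_of_le (by positivity) (hl n hn)
    have hK' : K ≤ 1 := le_one_of_mul_le_of_monotoneOn hmono (hone hn)
      (pos_of_mul_pos_left hln n.cast_nonneg).le (hpos n (hone hn)) (hratio n hn)
    have hsn : f n ^ (-t) ≤ 1 := (sq_le_one_iff₀ (hs.pos n hn).le).1 <|
      (hsq.le_tsum ⟨n, hn⟩ fun _ _ => sq_nonneg _).trans harea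
    exact exists_forall_rpow_neg_sq_le (hn₀.trans hn) hM₀ ht.le ht' hmono hpos hK hK'
      (hratio n hn) (hl n hn) hsn
  · have hfn := hpos n (hone hn)
    rw [sum_rpow_neg_rpow hnonneg, tsum_rpow_neg_sq hnonneg t (hn₀.trans hn), ← mul_assoc,
      mul_rpow_neg_rpow_mul_rpow hM₀' hfn, inv_mul_lt_iff₀ (by positivity)]
    exact hwide n hn
  · rw [sum_rpow_neg_rpow hnonneg, neg_add_eq_sub, ← neg_sub, Real.rpow_neg hM₀'.le]
    exact (le_inv_mul_iff₀ (by positivity)).2 hstart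

lemma mul_rpow_le_of_rpow_div_mul_le {t δ x S T b c d lam ν : ℝ} (hδ : 0 ≤ 1 + δ) (hx : 0 < x)
    (hT₀ : 0 ≤ T) (hc : 0 < c) (hd : 0 ≤ d) (hlam : 0 < lam) (hb : 0 ≤ b)
    (hT : T ≤ d * lam / x ^ (2 * t)) (hS : c * ν / x ^ (t + δ * t) ≤ S)
    (h : d ^ ((1 + δ) / 2) / c * b ≤ ν * lam ^ (-(1 + δ) / 2)) :
    b * T ^ ((1 + δ) / 2) ≤ S := by
  have hexp : (x ^ (2 * t)) ^ ((1 + δ) / 2) = x ^ (t + δ * t) := by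
    rw [← Real.rpow_mul hx.le]
    ring_nf
  have hν : b * (d ^ ((1 + δ) / 2) * lam ^ ((1 + δ) / 2)) ≤ c * ν := by
    rw [neg_div, Real.rpow_neg hlam.le, ← div_eq_mul_inv, div_mul_eq_mul_div,
      div_le_div_iff₀ hc (Real.rpow_pos_of_pos hlam _)] at h
    linarith
  calc b * T ^ ((1 + δ) / 2) ≤ b * (d * lam / x ^ (2 * t)) ^ ((1 + δ) / 2) := by gcongr
    _ = b * (d ^ ((1 + δ) / 2) * lam ^ ((1 + δ) / 2)) / x ^ (t + δ * t) := by
        rw [Real.div_rpow (by positivity) (by positivity), Real.mul_rpow hd hlam.le, hexp,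
          ← mul_div_assoc]
    _ ≤ c * ν / x ^ (t + δ * t) := by gcongr
    _ ≤ S := hS

lemma lt_mul_rpow_mul_of_div_lt {t δ x S T b c d e lam ν : ℝ} (hx : 0 < x) (hν : 0 < ν)
    (hd : 0 < d) (he : 0 < e) (hb : 0 ≤ b) (hS : S ≤ c * ν / x ^ (t + δ * t))
    (hT : d * lam / x ^ (2 * t) ≤ T) (hlam : e * ν ≤ lam) (h : c / (e * d) < b) :
    S < b * x ^ ((1 - δ) * t) * T := by
  rw [div_lt_iff₀ (by positivity)] at h
  calc S ≤ c * ν / x ^ (t + δ * t) := hS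
    _ < b * (e * d) * ν / x ^ (t + δ * t) := by gcongr
    _ = b * (d * (e * ν)) / x ^ (t + δ * t) := by ring
    _ ≤ b * (d * lam) / x ^ (t + δ * t) := by gcongr
    _ = b * x ^ ((1 - δ) * t) * (d * lam / x ^ (2 * t)) := by
        have hexp : x ^ (2 * t) = x ^ (t + δ * t) * x ^ ((1 - δ) * t) := by
          rw [← Real.rpow_add hx]
          ring_nf
        rw [hexp]
        field_simp
    _ ≤ b * x ^ ((1 - δ) * t) * T := by gcongr

lemma le_rpow_of_div_rpow_rpow_le {a K r δ M : ℝ} (hK : 0 < K) (hK' : K ≤ 1) (hr : 0 ≤ r)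
    (ha : 0 ≤ a) (hδ : 0 < δ) (hM : 0 ≤ M) (h : (a / K ^ r) ^ (2 / δ) ≤ M) :
    a ≤ M ^ (δ / 2) := by
  have hKr : a ≤ a / K ^ r :=
    le_div_self ha (Real.rpow_pos_of_pos hK _) (Real.rpow_le_one hK.le hK' hr)
  rw [← inv_div δ] at h
  exact hKr.trans ((Real.rpow_inv_le_iff_of_pos (ha.trans hKr) hM (half_pos hδ)).1 h)

lemma lt_rpow_of_mul_rpow_le {a t δ M : ℝ} (ha : 0 < a) (ht : 0 < t) (ht' : t ≤ 1) (hδ : 0 < δ)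
    (hM : 0 ≤ M) (hM' : 1 < M ^ (δ / 2)) (h : 4 ^ (1 / δ) * a ^ (2 / (t * δ)) ≤ M) :
    a < M ^ (δ / 2) := by
  rcases le_or_gt a 1 with ha' | ha'
  · exact ha'.trans_lt hM'
  have h' : (2 * a ^ (1 / t)) ^ (δ / 2)⁻¹ ≤ M := by
    rw [Real.mul_rpow (by positivity) (by positivity), ← Real.rpow_mul ha.le]
    convert h using 2
    · rw [show (4 : ℝ) = 2 ^ (2 : ℝ) by norm_num, ← Real.rpow_mul (by norm_num)]
      field_simp
    · field_simp
  calc a = a ^ (1 : ℝ) := (Real.rpow_one a).symm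
    _ ≤ a ^ (1 / t) := Real.rpow_le_rpow_of_exponent_le ha'.le ((one_le_div ht).2 ht')
    _ < 2 * a ^ (1 / t) := lt_mul_of_one_lt_left (by positivity) one_lt_two
    _ ≤ M ^ (δ / 2) :=
        (Real.rpow_inv_le_iff_of_pos (by positivity) hM (half_pos hδ)).1 h'

lemma le_rpow_and_lt_rpow_of_max_le {a b t K M : ℝ} (ht : 0 < t) (ht' : t < 1) (ha : 0 < a)
    (hb : 1 < b) (hK : 0 < K) (hK' : K ≤ 1) (hM : 0 ≤ M)
    (h : max (4 ^ (1 / (1 - t)) * a ^ (2 / (t * (1 - t))))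
      ((b / K ^ (t * (2 - t))) ^ (2 / (1 - t))) ≤ M) :
    b ≤ M ^ ((1 - t) / 2) ∧ a < M ^ ((1 - t) / 2) := by
  have hδ : 0 < 1 - t := sub_pos.2 ht'
  obtain ⟨hMa, hMb⟩ := max_le_iff.1 h
  have hbM : b ≤ M ^ ((1 - t) / 2) := le_rpow_of_div_rpow_rpow_le hK hK'
    (mul_pos ht (by linarith)).le (by linarith) hδ hM hMb
  exact ⟨hbM, lt_rpow_of_mul_rpow_le ha ht ht'.le hδ hM (hb.trans_le hbM) hMa⟩

theorem perfect_packing_of_sidelengths_f_pow_neg_t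
    (t δ : ℝ) (ht₁ : 1 / 2 < t) (ht₂ : t < 1) (hδ : δ = 1 - t)
    (c₁ c₂ d₁ d₂ clv l K : ℝ)
    (hc₁ : 0 < c₁) (hc₂ : 0 < c₂) (hd₁ : 0 < d₁) (hd₂ : 0 < d₂)
    (hclv : 0 < clv) (hl : 0 < l) (hK : 0 < K)
    (ν₁ ν₂ lam₁ lam₂ : ℕ → ℝ)
    (hν₁ : ∀ n, 0 < ν₁ n) (hν₂ : ∀ n, 0 < ν₂ n)
    (hlam₁ : ∀ n, 0 < lam₁ n) (hlam₂ : ∀ n, 0 < lam₂ n)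
    (ξ₁ ξ₂ η₁ η₂ : ℝ) (hξ₁ : 0 < ξ₁) (hξ₂ : 0 < ξ₂) (hη₁ : 0 < η₁) (hη₂ : 0 < η₂)
    (M N₀ N₁ : ℕ) (hM : 0 < M) (hN₁ : 0 < N₁) (hN₁N₀ : N₁ < N₀)
    (f : ℝ → ℝ)
    (hf_smooth : ContDiffOn ℝ (⊤ : ℕ∞) f (Set.Ici 1))
    (hf_incr : StrictMonoOn f (Set.Ici 1))
    (hf_pos : ∀ x : ℝ, 1 ≤ x → 0 < f x)
    (hf_sum : Summable fun n : {n : ℕ // N₁ ≤ n} => f ((n : ℕ) : ℝ) ^ (-(2 * t)))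
    -- condition (1)
    (cond1 : ∀ n₀ : ℕ, N₀ ≤ n₀ → f (n₀ : ℝ) ≥ K * f ((1 + l) * (n₀ : ℝ)))
    (cond1' : K ≥ (2 / 3 : ℝ) ^ ((1 : ℝ) / 2))
    -- condition (2)
    (cond2 : ∀ n₁ : ℕ, N₁ ≤ n₁ →
      c₁ * ξ₁ * ν₁ n₁ / f (n₁ : ℝ) ^ (t + δ * t) ≤
          ∑ n ∈ Finset.Icc 1 (n₁ - 1), f (n : ℝ) ^ (-(t + δ * t)) ∧
        ∑ n ∈ Finset.Icc 1 (n₁ - 1), f (n : ℝ) ^ (-(t + δ * t)) ≤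
          c₂ * ξ₂ * ν₂ n₁ / f (n₁ : ℝ) ^ (t + δ * t))
    -- condition (3)
    (cond3 : ∀ n₁ : ℕ, N₁ ≤ n₁ →
      d₁ * η₁ * lam₁ n₁ / f (n₁ : ℝ) ^ (2 * t) ≤
          (∑' n : {n : ℕ // n₁ ≤ n}, f ((n : ℕ) : ℝ) ^ (-(2 * t))) ∧
        (∑' n : {n : ℕ // n₁ ≤ n}, f ((n : ℕ) : ℝ) ^ (-(2 * t))) ≤
          d₂ * η₂ * lam₂ n₁ / f (n₁ : ℝ) ^ (2 * t))
    -- condition (4)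
    (cond4 : ∀ n₀ : ℕ, N₀ ≤ n₀ → lam₁ n₀ ≥ clv * ν₂ n₀)
    -- condition (5)
    (cond5 : ∀ n₀ : ℕ, N₀ ≤ n₀ → lam₂ n₀ ≤ d₂⁻¹ * η₂⁻¹ * f (n₀ : ℝ) ^ (2 * t))
    -- condition (6)
    (cond6 : (M : ℝ) ≥
      max ((4 : ℝ) ^ ((1 : ℝ) / (1 - t)) * (c₂ * ξ₂ / (clv * d₁ * η₁)) ^ (2 / (t * (1 - t))))
        ((50 / K ^ (t * (2 - t))) ^ (2 / (1 - t))))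
    -- condition (7)
    (cond7 : ∀ n₀ : ℕ, N₀ ≤ n₀ → ∀ x ∈ Set.Icc (n₀ : ℝ) ((n₀ : ℝ) + 9 * (M : ℝ) ^ 2),
      derivWithin f (Set.Ici 1) x ≤ (1 / 4752) * ((M : ℝ) ^ 4)⁻¹ * f (n₀ : ℝ))
    -- condition (8)
    (cond8 : ∀ n₀ : ℕ, N₀ ≤ n₀ →
      f ((n₀ : ℝ) + 9 * (M : ℝ) ^ 2) ≤ (264 * (M : ℝ) ^ 2) ^ ((1 : ℝ) / t) * f (n₀ : ℝ))
    -- condition (9)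
    (cond9 : ∀ n₀ : ℕ, N₀ ≤ n₀ → 9 * (M : ℝ) * f (n₀ : ℝ) ^ t ≤ l * (n₀ : ℝ))
    -- condition (10)
    (cond10 : ∀ n₀ : ℕ, N₀ ≤ n₀ →
      ν₁ n₀ * lam₂ n₀ ^ (-(1 + δ) / 2) ≥
        ((d₂ * η₂) ^ ((1 + δ) / 2) / (c₁ * ξ₁)) * (M : ℝ) ^ (1 - δ / 2)) :
    ∀ n₀ : ℕ, N₀ ≤ n₀ →
      ∃ (c : ℝ × ℝ) (pos : {n : ℕ // n₀ ≤ n} → ℝ × ℝ),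
        PerfectlyPacked (fun n : {n : ℕ // n₀ ≤ n} => square (pos n) (f ((n : ℕ) : ℝ) ^ (-t)))
          (square c (Real.sqrt (∑' n : {n : ℕ // n₀ ≤ n}, f ((n : ℕ) : ℝ) ^ (-(2 * t))))) := by
  subst hδ
  intro n₀ hn₀
  have hN₁' {n : ℕ} (hn : n₀ ≤ n) : N₁ ≤ n := hN₁N₀.le.trans (hn₀.trans hn)
  have hone {n : ℕ} (hn : n₀ ≤ n) : (1 : ℝ) ≤ n := Nat.one_le_cast.2 (hN₁.trans_le (hN₁' hn))
  have ht : 0 < t := one_half_pos.trans ht₁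
  have hmono := hf_incr.monotoneOn
  have hf₀ := hf_pos n₀ (hone le_rfl)
  have hK' := le_one_of_mul_le_of_monotoneOn hmono (hone le_rfl) hl.le hf₀ (cond1 n₀ hn₀)
  obtain ⟨hM50, hMc⟩ := le_rpow_and_lt_rpow_of_max_le ht ht₂ (by positivity) (by norm_num) hK hK'
    M.cast_nonneg cond6
  rw [mul_assoc] at hMc
  have hwide (n : ℕ) (hn : n₀ ≤ n) := lt_mul_rpow_mul_of_div_lt (hf_pos n (hone hn)) (hν₂ n)
    (mul_pos hd₁ hη₁) hclv (by positivity) (cond2 n (hN₁' hn)).2 (cond3 n (hN₁' hn)).1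
    (cond4 n (hn₀.trans hn)) hMc
  have harea := (cond3 n₀ (hN₁' le_rfl)).2.trans <| (div_le_one (by positivity)).2 <|
    (le_inv_mul_iff₀ (mul_pos hd₂ hη₂)).1 <| mul_inv d₂ η₂ ▸ cond5 n₀ hn₀
  have hstart := mul_rpow_le_of_rpow_div_mul_le (by positivity) hf₀
    (tsum_nonneg fun i => Real.rpow_nonneg (hf_pos _ (hone i.2)).le _) (mul_pos hc₁ hξ₁)
    (mul_pos hd₂ hη₂).le (hlam₂ n₀) (by positivity) (cond3 n₀ (hN₁' le_rfl)).2
    (cond2 n₀ (hN₁' le_rfl)).1 (cond10 n₀ hn₀)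
  exact ⟨0, perfect_packing_of_sidelengths_f_pow_neg_t_general ht ht₂.le (sub_pos.2 ht₂)
    (sub_lt_self 1 ht) (hN₁.trans_le (hN₁' le_rfl)) hM50 ((Real.sqrt_eq_rpow _).trans_le cond1')
    (hf_smooth.differentiableOn (by simp)) hmono hf_pos
    ((summable_subtype_le_iff (g := fun n => f n ^ (-(2 * t))) N₁).1 hf_sum)
    (fun n hn => cond1 n (hn₀.trans hn)) (fun n hn => cond9 n (hn₀.trans hn))
    (fun n hn => cond7 n (hn₀.trans hn)) hwide harea hstart 0⟩
end

section
/- Let 1/2 < t < 1, let M be a positive integer, let f : ℝ_{≥1} → ℝ_{>0} be a smooth increasing function, and let n₀ be a positive integer such that max_{x∈[n₀, n₀+9M²]} f'(x) ≤ (1/4752)·M^{-4}·f(n₀) and f(n₀+9M²) ≤ (264M²)^{1/t}·f(n₀). Let R be a rectangle with M·f(n₀)^{-t} ≤ w(R) ≤ h(R) ≤ 3M·f(n₀)^{-t}. Then there exists a positive integer n₀' with M² ≤ n₀' - n₀ ≤ 9M² such that R is perfectly packed by squares of sidelength f(n)^{-t} for n₀ ≤ n < n₀' together with a finite family ℛ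 of rectangles with pairwise disjoint interiors, where the width of each rectangle in ℛ is at most 2·f(n₀)^{-t} and the unweighted total perimeter satisfies perim(ℛ) ≤ 25·M·f(n₀)^{-t}. -/
open Set MeasureTheory

/-- The axis-parallel rectangle with lower-left corner `c`, horizontal sidelength `a`
and vertical sidelength `b`. -/
noncomputable def rectangle (c : ℝ × ℝ) (a b : ℝ) : Set (ℝ × ℝ) :=
  Set.Icc c.1 (c.1 + a) ×ˢ Set.Icc c.2 (c.2 + b)

/-! Place the squares, all of sidelength nearly `s = f n₀ ^ (-t)`, in `m` columns of `n`, where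
`m = ⌊a / s⌋` and `n = ⌊b / s⌋`, filling the columns from left to right and each of them from top
to bottom. Sidelengths then decrease to the right and increase upwards, so if the squares of each
row are pushed to the left and those of each column downwards, they do not overlap: at each vertex
of the grid the two horizontal and the two vertical walls are offset so as to leave a small
rectangular hole. An additional column and an additional row of rectangles fill the space up to the
right and top sides of `R`. That these cells and the holes partition `R` is a discrete divergence
theorem for the products of the step functions at the walls. If all sidelengths lie in `[s - d, s]`,
the `m * n` holes have sides at most `m * d` and `n * d`, so that for `d` of order `s / M ^ 2` they
contribute only `O(M * s)` to the perimeter. -/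

section PerfectPacking

/-- The family `A` is a perfect packing of `R`: its members lie in `R`, have pairwise disjoint
interiors, and cover `R` up to a null set. -/
structure IsPerfectPacking {α ι : Type*} [TopologicalSpace α] [MeasureSpace α]
    (A : ι → Set α) (R : Set α) : Prop where
  subset : ∀ i, A i ⊆ R
  pairwise_disjoint_interior : Pairwise fun i j => Disjoint (interior (A i)) (interior (A j))
  volume_diff_iUnion : volume (R \ ⋃ i, A i) = 0

lemma IsPerfectPacking.comp_equiv {α ι κ : Type*} [TopologicalSpace α] [MeasureSpace α]
    {A : ι → Set α} {R : Set α} (h : IsPerfectPacking A R) (e : κ ≃ ι) :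
    IsPerfectPacking (A ∘ e) R where
  subset k := h.subset (e k)
  pairwise_disjoint_interior _ _ hkl := h.pairwise_disjoint_interior (e.injective.ne hkl)
  volume_diff_iUnion := by
    simpa only [Function.comp_apply, e.surjective.iUnion_comp A] using h.volume_diff_iUnion

variable {α ι : Type*} [Fintype ι] {A : ι → Set α} {T : Set α}

lemma pairwise_disjoint_of_sum_indicator_eq
    (h : ∀ z, ∑ i, (A i).indicator (1 : α → ℤ) z = T.indicator 1 z) :
    Pairwise fun i j => Disjoint (A i) (A j) := by
  classical
  intro i j hij
  refine Set.disjoint_left.2 fun z hi hj => ?_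
  have hpair : ∑ k ∈ {i, j}, (A k).indicator (1 : α → ℤ) z ≤ 1 :=
    calc ∑ k ∈ {i, j}, (A k).indicator (1 : α → ℤ) z
        ≤ ∑ k, (A k).indicator (1 : α → ℤ) z :=
          Finset.sum_le_univ_sum_of_nonneg fun k => indicator_nonneg (fun _ _ => zero_le_one) z
      _ = T.indicator 1 z := h z
      _ ≤ 1 := indicator_le_self' (fun _ _ => zero_le_one) z
  rw [Finset.sum_pair hij, indicator_of_mem hi, indicator_of_mem hj] at hpair
  norm_num at hpair

lemma subset_iUnion_of_sum_indicator_eq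
    (h : ∀ z, ∑ i, (A i).indicator (1 : α → ℤ) z = T.indicator 1 z) : T ⊆ ⋃ i, A i := by
  intro z hz
  have hne : ∑ i, (A i).indicator (1 : α → ℤ) z ≠ 0 := by
    rw [h, indicator_of_mem hz]
    exact one_ne_zero
  obtain ⟨i, -, hi⟩ := Finset.exists_ne_zero_of_sum_ne_zero hne
  exact mem_iUnion.2 ⟨i, mem_of_indicator_ne_zero hi⟩

end PerfectPacking

section Boxes

/-- The half-open counterpart of a closed box. A perfect packing by closed boxes corresponds to a
genuine partition into half-open ones. -/
def halfOpenBox (b : NonemptyInterval (ℝ × ℝ)) : Set (ℝ × ℝ) :=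
  Ico b.fst.1 b.snd.1 ×ˢ Ico b.fst.2 b.snd.2

lemma interior_subset_halfOpenBox (b : NonemptyInterval (ℝ × ℝ)) :
    interior (b : Set (ℝ × ℝ)) ⊆ halfOpenBox b := by
  rw [NonemptyInterval.coe_def, Icc_prod_eq, interior_prod_eq, interior_Icc, interior_Icc]
  exact prod_mono Ioo_subset_Ico_self Ioo_subset_Ico_self

lemma halfOpenBox_subset (b : NonemptyInterval (ℝ × ℝ)) : halfOpenBox b ⊆ b := by
  rw [NonemptyInterval.coe_def, Icc_prod_eq]
  exact prod_mono Ico_subset_Icc_self Ico_subset_Icc_self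

lemma volume_diff_halfOpenBox (b : NonemptyInterval (ℝ × ℝ)) :
    volume ((b : Set (ℝ × ℝ)) \ halfOpenBox b) = 0 := by
  have h : (b : Set (ℝ × ℝ)) =ᵐ[volume] halfOpenBox b := by
    rw [NonemptyInterval.coe_def, Icc_prod_eq, Measure.volume_eq_prod]
    exact Measure.set_prod_ae_eq Ico_ae_eq_Icc.symm Ico_ae_eq_Icc.symm
  exact ae_le_set.1 h.le

lemma indicator_Ico_one {a b : ℝ} (hab : a ≤ b) (x : ℝ) :
    (Ico a b).indicator (1 : ℝ → ℤ) x = (Ici a).indicator 1 x - (Ici b).indicator 1 x := by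
  rw [← Ici_sdiff_Ici, indicator_sdiff (Ici_subset_Ici.2 hab), Pi.sub_apply]

lemma indicator_halfOpenBox_one (b : NonemptyInterval (ℝ × ℝ)) (z : ℝ × ℝ) :
    (halfOpenBox b).indicator (1 : ℝ × ℝ → ℤ) z =
      ((Ici b.fst.1).indicator 1 z.1 - (Ici b.snd.1).indicator 1 z.1) *
        ((Ici b.fst.2).indicator 1 z.2 - (Ici b.snd.2).indicator 1 z.2) := by
  rw [← indicator_Ico_one b.fst_le_snd.1, ← indicator_Ico_one b.fst_le_snd.2]
  exact indicator_prod_one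

lemma isPerfectPacking_of_sum_indicator_halfOpenBox {ι : Type*} [Fintype ι]
    {B : ι → NonemptyInterval (ℝ × ℝ)} {R : NonemptyInterval (ℝ × ℝ)} (hBR : ∀ i, B i ≤ R)
    (h : ∀ z, ∑ i, (halfOpenBox (B i)).indicator (1 : ℝ × ℝ → ℤ) z =
      (halfOpenBox R).indicator 1 z) :
    IsPerfectPacking (fun i => (B i : Set (ℝ × ℝ))) R where
  subset i := NonemptyInterval.coe_subset_coe.2 (hBR i)
  pairwise_disjoint_interior _ _ hij := (pairwise_disjoint_of_sum_indicator_eq h hij).mono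
    (interior_subset_halfOpenBox _) (interior_subset_halfOpenBox _)
  volume_diff_iUnion := measure_mono_null
    (sdiff_subset_sdiff_right ((subset_iUnion_of_sum_indicator_eq h).trans
      (iUnion_mono fun i => halfOpenBox_subset (B i))))
    (volume_diff_halfOpenBox R)

lemma rectangle_eq_Icc (c : ℝ × ℝ) (a b : ℝ) :
    rectangle c a b = Icc c (c.1 + a, c.2 + b) := by
  rw [Icc_prod_eq, rectangle]

lemma rectangle_length (b : NonemptyInterval (ℝ × ℝ)) :
    rectangle b.fst b.length.1 b.length.2 = b := by
  rw [rectangle_eq_Icc, NonemptyInterval.coe_def]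
  simp [NonemptyInterval.length]

end Boxes

section ShearedGrid

/-- The divergence theorem for the field with components `A i j * (B i (j + 1) - B i j)` and
`A (i + 1) j * (B i j - B (i + 1) j)`. -/
lemma sum_cells_add_sum_holes {R : Type*} [CommRing R] {A B : ℕ → ℕ → R} {m n : ℕ}
    {a₀ a₁ b₀ b₁ : R} (hA₀ : ∀ j, A 0 j = a₀) (hA₁ : ∀ j, A (m + 1) j = a₁)
    (hB₀ : ∀ i, B i 0 = b₀) (hB₁ : ∀ i, B i (n + 1) = b₁) :
    ∑ i ∈ Finset.range (m + 1), ∑ j ∈ Finset.range (n + 1),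
        (A i j - A (i + 1) j) * (B i j - B i (j + 1)) +
      ∑ i ∈ Finset.range m, ∑ j ∈ Finset.range n,
        (A (i + 1) j - A (i + 1) (j + 1)) * (B (i + 1) (j + 1) - B i (j + 1)) =
    (a₀ - a₁) * (b₀ - b₁) := by
  let F : ℕ → ℕ → R := fun i j => A i j * (B i (j + 1) - B i j)
  let G : ℕ → ℕ → R := fun i j => A (i + 1) j * (B i j - B (i + 1) j)
  have hF : ∑ i ∈ Finset.range (m + 1), ∑ j ∈ Finset.range (n + 1), (F (i + 1) j - F i j) =
      (a₀ - a₁) * (b₀ - b₁) := by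
    rw [Finset.sum_comm]
    have htele (j : ℕ) : ∑ i ∈ Finset.range (m + 1), (F (i + 1) j - F i j) =
        a₁ * (B (m + 1) (j + 1) - B (m + 1) j) - a₀ * (B 0 (j + 1) - B 0 j) := by
      rw [Finset.sum_range_sub (fun i => F i j)]
      simp only [F, hA₀, hA₁]
    simp only [htele, Finset.sum_sub_distrib, ← Finset.mul_sum, Finset.sum_range_sub (B _), hB₀,
      hB₁]
    ring
  have hG : ∑ i ∈ Finset.range (m + 1), ∑ j ∈ Finset.range (n + 1), (G i (j + 1) - G i j) = 0 := by
    simp only [Finset.sum_range_sub (G _), G, hB₀, hB₁, sub_self, mul_zero, Finset.sum_const_zero]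
  have hholes : ∑ i ∈ Finset.range m, ∑ j ∈ Finset.range n,
        (A (i + 1) j - A (i + 1) (j + 1)) * (B (i + 1) (j + 1) - B i (j + 1)) =
      ∑ i ∈ Finset.range (m + 1), ∑ j ∈ Finset.range (n + 1),
        (A (i + 1) j - A (i + 1) (j + 1)) * (B (i + 1) (j + 1) - B i (j + 1)) := by
    simp only [Finset.sum_range_succ, hA₁, hB₁, sub_self, zero_mul, mul_zero, add_zero,
      Finset.sum_const_zero]
  rw [hholes, ← hF, ← add_zero (∑ i ∈ _, ∑ j ∈ _, (F (i + 1) j - F i j)), ← hG]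
  simp only [← Finset.sum_add_distrib]
  refine Finset.sum_congr rfl fun i _ => Finset.sum_congr rfl fun j _ => ?_
  ring

/-- The functions `X` and `Y` describe a sheared grid of `(m + 1) × (n + 1)` cells
`[X i j, X (i + 1) j] × [Y i j, Y i (j + 1)]` in `R`: the cells of each row share their vertical
walls, those of each column their horizontal walls, and at each of the `m * n` interior vertices a
rectangular hole remains. -/
structure IsShearedGrid (m n : ℕ) (X Y : ℕ → ℕ → ℝ) (R : NonemptyInterval (ℝ × ℝ)) :
    Prop where
  X_zero : ∀ j, X 0 j = R.fst.1
  X_last : ∀ j, X (m + 1) j = R.snd.1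
  Y_zero : ∀ i, Y i 0 = R.fst.2
  Y_last : ∀ i, Y i (n + 1) = R.snd.2
  monotone_X_left : ∀ j, Monotone fun i => X i j
  monotone_X_right : ∀ i, Monotone (X i)
  antitone_Y_left : ∀ j, Antitone fun i => Y i j
  monotone_Y_right : ∀ i, Monotone (Y i)

/-- The index type of the parts of a sheared grid other than the cells `(i, j)` with `i < m` and
`j < n`: the holes, the cells `(i, n)` of the top row with `i < m`, and the cells `(m, j)` of the
right column. -/
abbrev Leftover (m n : ℕ) : Type := (Fin m × Fin n) ⊕ Fin m ⊕ Fin (n + 1)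

namespace IsShearedGrid

variable {m n : ℕ} {X Y : ℕ → ℕ → ℝ} {R : NonemptyInterval (ℝ × ℝ)}
  (h : IsShearedGrid m n X Y R)

/-- The cell in column `i` and row `j` of a sheared grid. -/
def cell (i j : ℕ) : NonemptyInterval (ℝ × ℝ) :=
  ⟨((X i j, Y i j), (X (i + 1) j, Y i (j + 1))),
    h.monotone_X_left j i.le_succ, h.monotone_Y_right i j.le_succ⟩

/-- The hole of a sheared grid between the cells `(i, j)` and `(i + 1, j + 1)`. -/
def hole (i j : ℕ) : NonemptyInterval (ℝ × ℝ) :=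
  ⟨((X (i + 1) j, Y (i + 1) (j + 1)), (X (i + 1) (j + 1), Y i (j + 1))),
    h.monotone_X_right (i + 1) j.le_succ, h.antitone_Y_left (j + 1) i.le_succ⟩

/-- The boxes indexed by `Leftover m n`. -/
def leftover : Leftover m n → NonemptyInterval (ℝ × ℝ)
  | .inl c => h.hole c.1 c.2
  | .inr (.inl i) => h.cell i n
  | .inr (.inr j) => h.cell m j

include h

lemma X_mem_Icc {i : ℕ} (hi : i ≤ m + 1) (j : ℕ) : X i j ∈ Icc R.fst.1 R.snd.1 :=
  ⟨h.X_zero j ▸ h.monotone_X_left j i.zero_le, h.X_last j ▸ h.monotone_X_left j hi⟩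

lemma Y_mem_Icc (i : ℕ) {j : ℕ} (hj : j ≤ n + 1) : Y i j ∈ Icc R.fst.2 R.snd.2 :=
  ⟨h.Y_zero i ▸ h.monotone_Y_right i j.zero_le, h.Y_last i ▸ h.monotone_Y_right i hj⟩

lemma cell_le {i j : ℕ} (hi : i ≤ m) (hj : j ≤ n) : h.cell i j ≤ R :=
  ⟨⟨(h.X_mem_Icc (by omega) j).1, (h.Y_mem_Icc i (by omega)).1⟩,
    (h.X_mem_Icc (by omega) j).2, (h.Y_mem_Icc i (by omega)).2⟩

lemma hole_le {i j : ℕ} (hi : i ≤ m) (hj : j ≤ n) : h.hole i j ≤ R :=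
  ⟨⟨(h.X_mem_Icc (by omega) j).1, (h.Y_mem_Icc (i + 1) (by omega)).1⟩,
    (h.X_mem_Icc (by omega) (j + 1)).2, (h.Y_mem_Icc i (by omega)).2⟩

lemma leftover_le (g : Leftover m n) : h.leftover g ≤ R := by
  rcases g with c | i | j
  · exact h.hole_le c.1.2.le c.2.2.le
  · exact h.cell_le i.2.le le_rfl
  · exact h.cell_le le_rfl (Nat.lt_succ_iff.1 j.2)

lemma sum_indicator_halfOpenBox (z : ℝ × ℝ) :
    ∑ c : Fin m × Fin n, (halfOpenBox (h.cell c.1 c.2)).indicator (1 : ℝ × ℝ → ℤ) z +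
      ∑ g, (halfOpenBox (h.leftover g)).indicator 1 z = (halfOpenBox R).indicator 1 z := by
  have key := sum_cells_add_sum_holes (m := m) (n := n)
    (A := fun i j => (Ici (X i j)).indicator (1 : ℝ → ℤ) z.1)
    (B := fun i j => (Ici (Y i j)).indicator (1 : ℝ → ℤ) z.2)
    (fun j => by rw [h.X_zero]) (fun j => by rw [h.X_last])
    (fun i => by rw [h.Y_zero]) (fun i => by rw [h.Y_last])
  rw [Finset.sum_range_succ] at key
  simp only [Finset.sum_range_succ _ n, Finset.sum_add_distrib] at key
  simp only [indicator_halfOpenBox_one, Fintype.sum_sum_type, Fintype.sum_prod_type, cell, hole,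
    leftover, Fin.sum_univ_castSucc (n := n), Fin.val_castSucc, Fin.val_last]
  simp only [Finset.sum_range] at key
  linear_combination key

lemma isPerfectPacking :
    IsPerfectPacking (Sum.elim (fun c : Fin m × Fin n => (h.cell c.1 c.2 : Set (ℝ × ℝ)))
      fun g => h.leftover g) R := by
  convert isPerfectPacking_of_sum_indicator_halfOpenBox (R := R)
    (B := Sum.elim (fun c : Fin m × Fin n => h.cell c.1 c.2) h.leftover)
    (Sum.rec (fun c => h.cell_le c.1.2.le c.2.2.le) h.leftover_le) fun z => ?_ with k
  · cases k <;> rfl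
  · rw [Fintype.sum_sum_type]
    exact h.sum_indicator_halfOpenBox z

end IsShearedGrid

end ShearedGrid

section Breakpoints

/-- The breakpoints of `[a, b]` when segments of lengths `u 0, …, u (m - 1)` are laid end to end
from `a` and one last segment fills the remaining space up to `b`. -/
noncomputable def breakpoints (a b : ℝ) (m : ℕ) (u : ℕ → ℝ) (i : ℕ) : ℝ :=
  if i ≤ m then a + ∑ k ∈ Finset.range i, u k else b

variable {a b c : ℝ} {m i : ℕ} {u v : ℕ → ℝ}

lemma breakpoints_of_le (hi : i ≤ m) : breakpoints a b m u i = a + ∑ k ∈ Finset.range i, u k :=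
  if_pos hi

@[simp]
lemma breakpoints_zero : breakpoints a b m u 0 = a := by
  simp [breakpoints_of_le]

@[simp]
lemma breakpoints_add_one_self : breakpoints a b m u (m + 1) = b :=
  if_neg (by omega)

lemma breakpoints_succ (hi : i < m) :
    breakpoints a b m u (i + 1) = breakpoints a b m u i + u i := by
  rw [breakpoints_of_le hi, breakpoints_of_le hi.le, Finset.sum_range_succ, add_assoc]

lemma breakpoints_mono_right (huv : ∀ k, u k ≤ v k) (i : ℕ) :
    breakpoints a b m u i ≤ breakpoints a b m v i := by
  unfold breakpoints
  split_ifs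
  · gcongr
    exact huv _
  · rfl

lemma breakpoints_le (hu : ∀ k, u k ≤ c) (hi : i ≤ m) : breakpoints a b m u i ≤ a + i * c := by
  rw [breakpoints_of_le hi]
  simpa using Finset.sum_le_card_nsmul (Finset.range i) u c fun k _ => hu k

lemma le_breakpoints (hu : ∀ k, c ≤ u k) (hi : i ≤ m) : a + i * c ≤ breakpoints a b m u i := by
  rw [breakpoints_of_le hi]
  simpa using Finset.card_nsmul_le_sum (Finset.range i) u c fun k _ => hu k

lemma monotone_breakpoints (hu : ∀ k, 0 ≤ u k) (hb : breakpoints a b m u m ≤ b) :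
    Monotone (breakpoints a b m u) := by
  refine monotone_nat_of_le_succ fun i => ?_
  rcases lt_trichotomy i m with hi | rfl | hi
  · rw [breakpoints_succ hi]
    exact le_add_of_nonneg_right (hu i)
  · rwa [breakpoints_add_one_self]
  · rw [breakpoints, breakpoints, if_neg (by omega), if_neg (by omega)]

end Breakpoints

section SquareGrid

/-- The square of sidelength `S i j`, nearly equal to `s`, may be put in column `i` and row `j` of
a sheared grid: sidelengths decrease from left to right and increase from bottom to top. -/
structure IsShearable (S : ℕ → ℕ → ℝ) (s d : ℝ) : Prop where
  antitone_left : ∀ j, Antitone fun i => S i j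
  monotone_right : ∀ i, Monotone (S i)
  sub_le : ∀ i j, s - d ≤ S i j
  le : ∀ i j, S i j ≤ s

/-- The abscissae of the sheared grid in `R` whose first `m` columns and `n` rows are made of
squares of sidelengths `S i j`. -/
noncomputable def gridX (m : ℕ) (S : ℕ → ℕ → ℝ) (R : NonemptyInterval (ℝ × ℝ)) (i j : ℕ) : ℝ :=
  breakpoints R.fst.1 R.snd.1 m (fun k => S k j) i

/-- The ordinates of the sheared grid in `R` whose first `m` columns and `n` rows are made of
squares of sidelengths `S i j`. -/
noncomputable def gridY (n : ℕ) (S : ℕ → ℕ → ℝ) (R : NonemptyInterval (ℝ × ℝ)) (i j : ℕ) : ℝ :=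
  breakpoints R.fst.2 R.snd.2 n (S i) j

variable {S : ℕ → ℕ → ℝ} {s d : ℝ} {m n : ℕ} {R : NonemptyInterval (ℝ × ℝ)}

namespace IsShearable

variable (hS : IsShearable S s d)
include hS

lemma gridX_mem_Icc {i : ℕ} (hi : i ≤ m) (j : ℕ) :
    gridX m S R i j ∈ Icc (R.fst.1 + i * (s - d)) (R.fst.1 + i * s) :=
  ⟨le_breakpoints (fun k => hS.sub_le k j) hi, breakpoints_le (fun k => hS.le k j) hi⟩

lemma gridY_mem_Icc (i : ℕ) {j : ℕ} (hj : j ≤ n) :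
    gridY n S R i j ∈ Icc (R.fst.2 + j * (s - d)) (R.fst.2 + j * s) :=
  ⟨le_breakpoints (hS.sub_le i) hj, breakpoints_le (hS.le i) hj⟩

lemma isShearedGrid (hds : d ≤ s) (hm : m * s ≤ R.length.1) (hn : n * s ≤ R.length.2) :
    IsShearedGrid m n (gridX m S R) (gridY n S R) R where
  X_zero _ := breakpoints_zero
  X_last _ := breakpoints_add_one_self
  Y_zero _ := breakpoints_zero
  Y_last _ := breakpoints_add_one_self
  monotone_X_left j := monotone_breakpoints (fun k => (sub_nonneg.2 hds).trans (hS.sub_le k j))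
    ((hS.gridX_mem_Icc le_rfl j).2.trans (le_sub_iff_add_le'.1 hm))
  monotone_X_right i _ _ hj := breakpoints_mono_right (fun k => hS.monotone_right k hj) i
  antitone_Y_left j _ _ hi := breakpoints_mono_right (fun k => hS.antitone_left k hi) j
  monotone_Y_right i := monotone_breakpoints (fun k => (sub_nonneg.2 hds).trans (hS.sub_le i k))
    ((hS.gridY_mem_Icc i le_rfl).2.trans (le_sub_iff_add_le'.1 hn))

end IsShearable

namespace IsShearedGrid

variable (h : IsShearedGrid m n (gridX m S R) (gridY n S R) R)

lemma coe_cell_eq_square {i j : ℕ} (hi : i < m) (hj : j < n) :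
    (h.cell i j : Set (ℝ × ℝ)) = square (h.cell i j).fst (S i j) := by
  have hX : gridX m S R (i + 1) j = gridX m S R i j + S i j := breakpoints_succ hi
  have hY : gridY n S R i (j + 1) = gridY n S R i j + S i j := breakpoints_succ hj
  rw [NonemptyInterval.coe_def, Icc_prod_eq]
  simp only [cell, square, hX, hY]

lemma length_fst_hole_le (hS : IsShearable S s d) (hd : 0 ≤ d) {i : ℕ} (hi : i < m) (j : ℕ) :
    (h.hole i j).length.1 ≤ m * d := by
  have hle := (hS.gridX_mem_Icc (R := R) (i := i + 1) hi (j + 1)).2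
  have hge := (hS.gridX_mem_Icc (R := R) (i := i + 1) hi j).1
  have him : ((i + 1 : ℕ) : ℝ) * d ≤ m * d := by gcongr; exact hi
  change gridX m S R (i + 1) (j + 1) - gridX m S R (i + 1) j ≤ m * d
  linarith

lemma length_snd_hole_le (hS : IsShearable S s d) (hd : 0 ≤ d) (i : ℕ) {j : ℕ} (hj : j < n) :
    (h.hole i j).length.2 ≤ n * d := by
  have hle := (hS.gridY_mem_Icc (R := R) i (j := j + 1) hj).2
  have hge := (hS.gridY_mem_Icc (R := R) (i + 1) (j := j + 1) hj).1
  have hjn : ((j + 1 : ℕ) : ℝ) * d ≤ n * d := by gcongr; exact hj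
  change gridY n S R i (j + 1) - gridY n S R (i + 1) (j + 1) ≤ n * d
  linarith

lemma length_fst_topCell_le (hS : IsShearable S s d) {i : ℕ} (hi : i < m) :
    (h.cell i n).length.1 ≤ s := by
  have hX : gridX m S R (i + 1) n = gridX m S R i n + S i n := breakpoints_succ hi
  change gridX m S R (i + 1) n - gridX m S R i n ≤ s
  linarith [hS.le i n]

lemma length_snd_topCell_le (hS : IsShearable S s d) (i : ℕ) :
    (h.cell i n).length.2 ≤ R.length.2 - n * (s - d) := by
  change gridY n S R i (n + 1) - gridY n S R i n ≤ R.snd.2 - R.fst.2 - n * (s - d)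
  rw [h.Y_last]
  linarith [(hS.gridY_mem_Icc (R := R) i (le_refl n)).1]

lemma length_fst_rightCell_le (hS : IsShearable S s d) (j : ℕ) :
    (h.cell m j).length.1 ≤ R.length.1 - m * (s - d) := by
  change gridX m S R (m + 1) j - gridX m S R m j ≤ R.snd.1 - R.fst.1 - m * (s - d)
  rw [h.X_last]
  linarith [(hS.gridX_mem_Icc (R := R) (le_refl m) j).1]

lemma sum_length_snd_rightCell :
    ∑ j : Fin (n + 1), (h.cell m j).length.2 = R.length.2 := by
  change ∑ j : Fin (n + 1), (gridY n S R m (j + 1) - gridY n S R m j) = _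
  rw [Fin.sum_univ_eq_sum_range (fun j => gridY n S R m (j + 1) - gridY n S R m j),
    Finset.sum_range_sub, h.Y_last, h.Y_zero]
  rfl

lemma min_length_leftover_le (hS : IsShearable S s d) (hd : 0 ≤ d)
    (hm : R.length.1 ≤ (m + 1) * s) (hn : R.length.2 ≤ (n + 1) * s) (hmd : m * d ≤ s)
    (hnd : n * d ≤ s) (g : Leftover m n) :
    min (h.leftover g).length.1 (h.leftover g).length.2 ≤ 2 * s := by
  rcases g with c | i | j
  · have hs : 0 ≤ s := le_trans (by positivity) hmd
    exact min_le_of_left_le ((h.length_fst_hole_le hS hd c.1.2 c.2).trans (by linarith))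
  · exact min_le_of_right_le ((h.length_snd_topCell_le hS i).trans (by linarith))
  · exact min_le_of_left_le ((h.length_fst_rightCell_le hS j).trans (by linarith))

lemma sum_length_leftover_le (hS : IsShearable S s d) (hd : 0 ≤ d)
    (hm : R.length.1 ≤ (m + 1) * s) (hn : R.length.2 ≤ (n + 1) * s) :
    ∑ g, ((h.leftover g).length.1 + (h.leftover g).length.2) ≤
      R.length.1 + R.length.2 + (m + n) * s + (m * n * (m + n + 2) + m) * d := by
  have hholes : ∑ c : Fin m × Fin n, ((h.hole c.1 c.2).length.1 + (h.hole c.1 c.2).length.2) ≤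
      m * n * (m * d + n * d) := by
    refine (Finset.sum_le_card_nsmul _ _ _ fun (c : Fin m × Fin n) _ => add_le_add
      (h.length_fst_hole_le hS hd c.1.2 c.2) (h.length_snd_hole_le hS hd c.1 c.2.2)).trans_eq ?_
    simp [mul_add]
  have htop : ∑ i : Fin m, ((h.cell i n).length.1 + (h.cell i n).length.2) ≤
      m * (s + (R.length.2 - n * (s - d))) := by
    refine (Finset.sum_le_card_nsmul _ _ _ fun (i : Fin m) _ => add_le_add
      (h.length_fst_topCell_le hS i.2) (h.length_snd_topCell_le hS i)).trans_eq ?_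
    simp [mul_add]
  have hright : ∑ j : Fin (n + 1), ((h.cell m j).length.1 + (h.cell m j).length.2) ≤
      (n + 1) * (R.length.1 - m * (s - d)) + R.length.2 := by
    rw [Finset.sum_add_distrib, h.sum_length_snd_rightCell]
    gcongr
    refine (Finset.sum_le_card_nsmul _ _ _ fun (j : Fin (n + 1)) _ =>
      h.length_fst_rightCell_le hS j).trans_eq ?_
    simp
  have htop' : m * R.length.2 ≤ m * ((n + 1) * s) := by gcongr
  have hright' : n * R.length.1 ≤ n * ((m + 1) * s) := by gcongr
  simp only [Fintype.sum_sum_type, leftover]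
  linarith

end IsShearedGrid

end SquareGrid

section Enumeration

/-- Enumeration of the cells of a grid with `m` columns and `n` rows by consecutive integers from
`n₀` on: columns from left to right, and each column from top to bottom. -/
def cellEnumeration (n₀ m n : ℕ) :
    Fin m × Fin n ≃ {k : ℕ // n₀ ≤ k ∧ k < n₀ + m * n} :=
  ((Equiv.refl _).prodCongr Fin.revPerm).trans <| finProdFinEquiv.trans
    { toFun k := ⟨n₀ + k, by omega⟩
      invFun k := ⟨k - n₀, by omega⟩
      left_inv k := by simp
      right_inv k := by ext; simp; omega }

lemma coe_cellEnumeration (n₀ m n : ℕ) (c : Fin m × Fin n) :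
    (cellEnumeration n₀ m n c : ℕ) = n₀ + (n - (c.2 + 1) + n * c.1) := by
  simp [cellEnumeration]

-- Truncated subtraction makes row `n`, which has no squares, a copy of row `n - 1`.
lemma isShearable_of_antitone {σ : ℕ → ℝ} {s d : ℝ} (hσ : Antitone σ) (hge : ∀ k, s - d ≤ σ k)
    (hle : ∀ k, σ k ≤ s) (n : ℕ) : IsShearable (fun i j => σ (n - (j + 1) + n * i)) s d where
  antitone_left _ _ _ hi := hσ (by gcongr)
  monotone_right _ _ _ hj := hσ (by gcongr)
  sub_le _ _ := hge _
  le _ _ := hle _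

end Enumeration

section Sidelengths

lemma sub_le_mul_sub_of_derivWithin_le {f : ℝ → ℝ} {s D : Set ℝ} {C : ℝ} (hD : Convex ℝ D)
    (hDs : D ⊆ s) (hf : DifferentiableOn ℝ f s) (hC : ∀ x ∈ interior D, derivWithin f s x ≤ C)
    {x y : ℝ} (hx : x ∈ D) (hy : y ∈ D) (hxy : x ≤ y) : f y - f x ≤ C * (y - x) := by
  refine hD.image_sub_le_mul_sub_of_deriv_le (hf.continuousOn.mono hDs)
    (hf.mono (interior_subset.trans hDs)) (fun z hz => ?_) x hx y hy hxy
  rw [← derivWithin_of_mem_nhds (Filter.mem_of_superset (mem_interior_iff_mem_nhds.1 hz) hDs)]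
  exact hC z hz

lemma one_sub_mul_rpow_neg_le {t ε u y : ℝ} (ht₀ : 0 ≤ t) (ht₁ : t ≤ 1) (hε : 0 ≤ ε) (hu : 0 < u)
    (hy : 0 < y) (hyu : y ≤ (1 + ε) * u) : (1 - ε) * u ^ (-t) ≤ y ^ (-t) := by
  have hε' : (1 + ε) ^ t ≤ 1 + ε := Real.rpow_le_self_of_one_le (by linarith) ht₁
  calc (1 - ε) * u ^ (-t) ≤ (1 + ε)⁻¹ * u ^ (-t) := by
        gcongr
        rw [← one_div, le_div_iff₀ (by positivity)]
        nlinarith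
    _ ≤ ((1 + ε) ^ t)⁻¹ * u ^ (-t) := by gcongr
    _ = ((1 + ε) * u) ^ (-t) := by
        rw [Real.mul_rpow (by positivity) hu.le, Real.rpow_neg (x := 1 + ε) (by positivity)]
    _ ≤ y ^ (-t) := Real.rpow_le_rpow_of_nonpos hy hyu (neg_nonpos.2 ht₀)

lemma one_sub_mul_rpow_neg_le_of_derivWithin_le {f : ℝ → ℝ} {s : Set ℝ} {t ε C u v : ℝ}
    (ht₀ : 0 ≤ t) (ht₁ : t ≤ 1) (hε : 0 ≤ ε) (huv : u ≤ v) (hs : Icc u v ⊆ s)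
    (hf : DifferentiableOn ℝ f s) (hpos : ∀ x ∈ s, 0 < f x)
    (hC : ∀ x ∈ Icc u v, derivWithin f s x ≤ C) (hCε : C * (v - u) ≤ ε * f u) :
    (1 - ε) * f u ^ (-t) ≤ f v ^ (-t) := by
  have hu := left_mem_Icc.2 huv
  have hv := right_mem_Icc.2 huv
  have hincr : f v - f u ≤ C * (v - u) := sub_le_mul_sub_of_derivWithin_le (convex_Icc u v) hs hf
    (fun x hx => hC x (interior_subset hx)) hu hv huv
  exact one_sub_mul_rpow_neg_le ht₀ ht₁ hε (hpos u (hs hu)) (hpos v (hs hv)) (by linarith)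

lemma antitoneOn_natCast_rpow_neg {f : ℝ → ℝ} {t : ℝ} {s : Set ℝ} {N : Set ℕ} (ht : 0 ≤ t)
    (hf : MonotoneOn f s) (hpos : ∀ x ∈ s, 0 < f x) (hN : ∀ n ∈ N, (n : ℝ) ∈ s) :
    AntitoneOn (fun n : ℕ => f n ^ (-t)) N := fun k hk l hl hkl =>
  Real.rpow_le_rpow_of_nonpos (hpos k (hN k hk)) (hf (hN k hk) (hN l hl) (by gcongr))
    (neg_nonpos.2 ht)

end Sidelengths

section SmallRectangle

lemma exists_nat_mul_le_le {s a : ℝ} {K L : ℕ} (hs : 0 < s) (hK : K * s ≤ a) (hL : a ≤ L * s) :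
    ∃ m : ℕ, K ≤ m ∧ m ≤ L ∧ m * s ≤ a ∧ a ≤ (m + 1) * s := by
  refine ⟨⌊a / s⌋₊, Nat.le_floor ((le_div_iff₀ hs).2 hK),
    Nat.floor_le_of_le ((div_le_iff₀ hs).2 hL), (le_div_iff₀ hs).1 (Nat.floor_le ?_),
    (div_le_iff₀ hs).1 (Nat.lt_floor_add_one _).le⟩
  exact div_nonneg (le_trans (by positivity) hK) hs.le

lemma two_mul_half_perimeter_bound_le {M m n : ℕ} {a b s d : ℝ} (hM : 0 < M) (hd : 0 ≤ d)
    (hds : 150 * M ^ 2 * d ≤ s) (hm : m ≤ 3 * M) (hn : n ≤ 3 * M) (ha : a ≤ 3 * M * s)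
    (hb : b ≤ 3 * M * s) :
    2 * (a + b + (m + n) * s + (m * n * (m + n + 2) + m) * d) ≤ 25 * M * s := by
  have hs : 0 ≤ s := le_trans (by positivity) hds
  have hM' : (1 : ℝ) ≤ M := by exact_mod_cast hM
  have hm' : (m : ℝ) ≤ 3 * M := by exact_mod_cast hm
  have hn' : (n : ℝ) ≤ 3 * M := by exact_mod_cast hn
  have hmn : (m + n) * s ≤ (3 * M + 3 * M) * s := by gcongr
  have hcount : (m * n * (m + n + 2) + m : ℝ) ≤ 75 * M ^ 3 :=
    calc (m * n * (m + n + 2) + m : ℝ)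
        ≤ 3 * M * (3 * M) * (3 * M + 3 * M + 2 * M) + 3 * M * M * M := by
          gcongr
          · linarith
          · nlinarith
      _ = 75 * M ^ 3 := by ring
  have herror : (m * n * (m + n + 2) + m) * d ≤ M * s / 2 :=
    calc (m * n * (m + n + 2) + m) * d ≤ 75 * M ^ 3 * d := by gcongr
      _ = M * (150 * M ^ 2 * d) / 2 := by ring
      _ ≤ M * s / 2 := by gcongr
  linarith

lemma exists_isPerfectPacking_of_antitone {M : ℕ} (hM : 0 < M) {σ : ℕ → ℝ} (hσ : Antitone σ)
    {s d : ℝ} (hs : 0 < s) (hd : 0 ≤ d) (hds : 150 * M ^ 2 * d ≤ s) (hge : ∀ k, s - d ≤ σ k)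
    (hle : ∀ k, σ k ≤ s) (R : NonemptyInterval (ℝ × ℝ))
    (hw : M * s ≤ min R.length.1 R.length.2) (hh : max R.length.1 R.length.2 ≤ 3 * M * s) :
    ∃ m n : ℕ, (M ≤ m ∧ m ≤ 3 * M) ∧ (M ≤ n ∧ n ≤ 3 * M) ∧
      ∃ (pos : Fin m × Fin n → ℝ × ℝ) (B : Leftover m n → NonemptyInterval (ℝ × ℝ)),
        IsPerfectPacking (Sum.elim (fun c => square (pos c) (σ (n - (c.2 + 1) + n * c.1)))
          fun g => (B g : Set (ℝ × ℝ))) R ∧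
        (∀ g, min (B g).length.1 (B g).length.2 ≤ 2 * s) ∧
        2 * ∑ g, ((B g).length.1 + (B g).length.2) ≤ 25 * M * s := by
  obtain ⟨hMa, hMb⟩ := le_min_iff.1 hw
  obtain ⟨haM, hbM⟩ := max_le_iff.1 hh
  obtain ⟨m, hMm, hmM, hma, ham⟩ := exists_nat_mul_le_le (L := 3 * M) hs hMa (by simpa using haM)
  obtain ⟨n, hMn, hnM, hnb, hbn⟩ := exists_nat_mul_le_le (L := 3 * M) hs hMb (by simpa using hbM)
  have hmul_le {k : ℕ} (hk : k ≤ 3 * M) : k * d ≤ s := by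
    have hk' : (k : ℝ) ≤ 150 * M ^ 2 := by exact_mod_cast (by nlinarith : k ≤ 150 * M ^ 2)
    exact (by gcongr : k * d ≤ 150 * M ^ 2 * d).trans hds
  have hds' : d ≤ s := by simpa using hmul_le (k := 1) (by omega)
  have hS := isShearable_of_antitone hσ hge hle n
  have hgrid := hS.isShearedGrid (R := R) hds' hma hnb
  refine ⟨m, n, ⟨hMm, hmM⟩, ⟨hMn, hnM⟩, fun c => (hgrid.cell c.1 c.2).fst, hgrid.leftover, ?_,
    hgrid.min_length_leftover_le hS hd ham hbn (hmul_le hmM) (hmul_le hnM),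
    (mul_le_mul_of_nonneg_left (hgrid.sum_length_leftover_le hS hd ham hbn) zero_le_two).trans
      (two_mul_half_perimeter_bound_le hM hd hds hmM hnM haM hbM)⟩
  convert hgrid.isPerfectPacking using 3 with c
  exact (hgrid.coe_cell_eq_square c.1.2 c.2.2).symm

lemma exists_isPerfectPacking_of_antitoneOn {M : ℕ} (hM : 0 < M) {x : ℕ → ℝ} {n₀ : ℕ}
    (hx : AntitoneOn x (Icc n₀ (n₀ + 9 * M ^ 2))) (hx₀ : 0 < x n₀)
    (hx₁ : (1 - 1 / (150 * (M : ℝ) ^ 2)) * x n₀ ≤ x (n₀ + 9 * M ^ 2))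
    (R : NonemptyInterval (ℝ × ℝ)) (hw : M * x n₀ ≤ min R.length.1 R.length.2)
    (hh : max R.length.1 R.length.2 ≤ 3 * M * x n₀) :
    ∃ n₀' : ℕ, n₀ + M ^ 2 ≤ n₀' ∧ n₀' ≤ n₀ + 9 * M ^ 2 ∧
      ∃ (N : ℕ) (B : Fin N → NonemptyInterval (ℝ × ℝ))
        (pos : {k : ℕ // n₀ ≤ k ∧ k < n₀'} → ℝ × ℝ),
        IsPerfectPacking (Sum.elim (fun k => square (pos k) (x k)) fun i => (B i : Set (ℝ × ℝ))) R ∧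
        (∀ i, min (B i).length.1 (B i).length.2 ≤ 2 * x n₀) ∧
        2 * ∑ i, ((B i).length.1 + (B i).length.2) ≤ 25 * M * x n₀ := by
  have hmem (k : ℕ) : n₀ + min k (9 * M ^ 2) ∈ Icc n₀ (n₀ + 9 * M ^ 2) := by simp
  obtain ⟨m, n, ⟨hMm, hmM⟩, ⟨hMn, hnM⟩, pos, B, hpack, hwidth, hperim⟩ :=
    exists_isPerfectPacking_of_antitone hM (σ := fun k => x (n₀ + min k (9 * M ^ 2)))
      (s := x n₀) (d := x n₀ / (150 * M ^ 2)) (fun k l hkl => hx (hmem k) (hmem l) (by gcongr)) hx₀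
      (by positivity) (mul_div_cancel₀ _ (by positivity)).le
      (fun k => le_trans (le_of_eq (by ring)) (hx₁.trans
        (hx (hmem k) (right_mem_Icc.2 le_self_add) (hmem k).2)))
      (fun k => hx (left_mem_Icc.2 le_self_add) (hmem k) (hmem k).1) R hw hh
  have hmnM : m * n ≤ 9 * M ^ 2 := (Nat.mul_le_mul hmM hnM).trans_eq (by ring)
  let e := cellEnumeration n₀ m n
  let e' := (Fintype.equivFin (Leftover m n)).symm
  refine ⟨n₀ + m * n, by nlinarith, by omega, _, B ∘ e', pos ∘ e.symm, ?_, fun i => hwidth (e' i),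
    (e'.sum_comp fun g => (B g).length.1 + (B g).length.2).symm ▸ hperim⟩
  have hside (k : {k : ℕ // n₀ ≤ k ∧ k < n₀ + m * n}) :
      n₀ + min (n - ((e.symm k).2 + 1) + n * (e.symm k).1) (9 * M ^ 2) = k := by
    have hk : (k : ℕ) = n₀ + (n - ((e.symm k).2 + 1) + n * (e.symm k).1) := by
      rw [← coe_cellEnumeration, e.apply_symm_apply]
    omega
  convert hpack.comp_equiv (e.symm.sumCongr e') using 1
  ext1 (k | i)
  · simp only [Sum.elim_inl, Function.comp_apply, Equiv.sumCongr_apply, Sum.map_inl, hside]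
  · rfl

theorem efficient_packing_of_small_rectangle_general {M : ℕ} (hM : 0 < M) {x : ℕ → ℝ} {n₀ : ℕ}
    (hx : AntitoneOn x (Icc n₀ (n₀ + 9 * M ^ 2))) (hx₀ : 0 < x n₀)
    (hx₁ : (1 - 1 / (150 * (M : ℝ) ^ 2)) * x n₀ ≤ x (n₀ + 9 * M ^ 2))
    (p : ℝ × ℝ) (a b : ℝ) (hw : M * x n₀ ≤ min a b) (hh : max a b ≤ 3 * M * x n₀) :
    ∃ n₀' : ℕ, n₀ + M ^ 2 ≤ n₀' ∧ n₀' ≤ n₀ + 9 * M ^ 2 ∧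
      ∃ (m : ℕ) (rc : Fin m → ℝ × ℝ) (ra rb : Fin m → ℝ)
        (pos : {n : ℕ // n₀ ≤ n ∧ n < n₀'} → ℝ × ℝ),
        (∀ i, 0 ≤ ra i ∧ 0 ≤ rb i) ∧
        (∀ n, square (pos n) (x n) ⊆ rectangle p a b) ∧
        (∀ i, rectangle (rc i) (ra i) (rb i) ⊆ rectangle p a b) ∧
        (Pairwise fun n n' => Disjoint (interior (square (pos n) (x n)))
          (interior (square (pos n') (x n')))) ∧
        (Pairwise fun i j => Disjoint (interior (rectangle (rc i) (ra i) (rb i)))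
          (interior (rectangle (rc j) (ra j) (rb j)))) ∧
        (∀ n i, Disjoint (interior (square (pos n) (x n)))
          (interior (rectangle (rc i) (ra i) (rb i)))) ∧
        volume (rectangle p a b \
          ((⋃ n, square (pos n) (x n)) ∪ ⋃ i, rectangle (rc i) (ra i) (rb i))) = 0 ∧
        (∀ i, min (ra i) (rb i) ≤ 2 * x n₀) ∧
        2 * (∑ i, (ra i + rb i)) ≤ 25 * M * x n₀ := by
  have hMx : 0 ≤ M * x n₀ := by positivity
  obtain ⟨ha, hb⟩ := le_min_iff.1 (hMx.trans hw)
  let R : NonemptyInterval (ℝ × ℝ) :=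
    ⟨(p, (p.1 + a, p.2 + b)), le_add_of_nonneg_right ha, le_add_of_nonneg_right hb⟩
  have hR₁ : R.length.1 = a := add_sub_cancel_left _ _
  have hR₂ : R.length.2 = b := add_sub_cancel_left _ _
  have hR : (R : Set (ℝ × ℝ)) = rectangle p a b := (rectangle_eq_Icc p a b).symm
  obtain ⟨n₀', hlo, hhi, N, B, pos, hpack, hwidth, hperim⟩ :=
    exists_isPerfectPacking_of_antitoneOn hM hx hx₀ hx₁ R (by rwa [hR₁, hR₂]) (by rwa [hR₁, hR₂])
  simp only [hR, ← rectangle_length] at hpack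
  refine ⟨n₀', hlo, hhi, N, fun i => (B i).fst, fun i => (B i).length.1, fun i => (B i).length.2,
    pos, fun i => Prod.le_def.1 (B i).length_nonneg, fun n => hpack.subset (.inl n),
    fun i => hpack.subset (.inr i),
    fun _ _ hne => hpack.pairwise_disjoint_interior (Sum.inl_injective.ne hne),
    fun _ _ hne => hpack.pairwise_disjoint_interior (Sum.inr_injective.ne hne),
    fun _ _ => hpack.pairwise_disjoint_interior Sum.inl_ne_inr, ?_, hwidth, hperim⟩
  simpa only [iUnion_sum, Sum.elim_inl, Sum.elim_inr] using hpack.volume_diff_iUnion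

end SmallRectangle

theorem efficient_packing_of_small_rectangle
    (t : ℝ) (ht₁ : 1 / 2 < t) (ht₂ : t < 1)
    (M : ℕ) (hM : 0 < M)
    (f : ℝ → ℝ)
    (hf_smooth : ContDiffOn ℝ (⊤ : ℕ∞) f (Set.Ici 1))
    (hf_incr : StrictMonoOn f (Set.Ici 1))
    (hf_pos : ∀ x : ℝ, 1 ≤ x → 0 < f x)
    (n₀ : ℕ) (hn₀ : 0 < n₀)
    (hderiv : ∀ x ∈ Set.Icc (n₀ : ℝ) ((n₀ : ℝ) + 9 * (M : ℝ) ^ 2),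
      derivWithin f (Set.Ici 1) x ≤ (1 / 4752) * ((M : ℝ) ^ 4)⁻¹ * f (n₀ : ℝ))
    (hgrowth : f ((n₀ : ℝ) + 9 * (M : ℝ) ^ 2) ≤ (264 * (M : ℝ) ^ 2) ^ ((1 : ℝ) / t) * f (n₀ : ℝ))
    -- the rectangle `R = rectangle p a b`, with width `min a b` and height `max a b`
    (p : ℝ × ℝ) (a b : ℝ)
    (hw : (M : ℝ) * f (n₀ : ℝ) ^ (-t) ≤ min a b)
    (hh : max a b ≤ 3 * (M : ℝ) * f (n₀ : ℝ) ^ (-t)) :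
    ∃ n₀' : ℕ, n₀ + M ^ 2 ≤ n₀' ∧ n₀' ≤ n₀ + 9 * M ^ 2 ∧
      ∃ (m : ℕ) (rc : Fin m → ℝ × ℝ) (ra rb : Fin m → ℝ)
        (pos : {n : ℕ // n₀ ≤ n ∧ n < n₀'} → ℝ × ℝ),
        (∀ i, 0 ≤ ra i ∧ 0 ≤ rb i) ∧
        -- all the squares and rectangles are contained in `R`
        (∀ n, square (pos n) (f ((n : ℕ) : ℝ) ^ (-t)) ⊆ rectangle p a b) ∧
        (∀ i, rectangle (rc i) (ra i) (rb i) ⊆ rectangle p a b) ∧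
        -- pairwise disjoint interiors
        (Pairwise fun n n' : {n : ℕ // n₀ ≤ n ∧ n < n₀'} =>
          Disjoint (interior (square (pos n) (f ((n : ℕ) : ℝ) ^ (-t))))
            (interior (square (pos n') (f ((n' : ℕ) : ℝ) ^ (-t))))) ∧
        (Pairwise fun i j : Fin m =>
          Disjoint (interior (rectangle (rc i) (ra i) (rb i)))
            (interior (rectangle (rc j) (ra j) (rb j)))) ∧
        (∀ n i, Disjoint (interior (square (pos n) (f ((n : ℕ) : ℝ) ^ (-t))))
            (interior (rectangle (rc i) (ra i) (rb i)))) ∧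
        -- the squares and the rectangles cover `R` up to a null set
        volume (rectangle p a b \
          ((⋃ n, square (pos n) (f ((n : ℕ) : ℝ) ^ (-t))) ∪
            ⋃ i, rectangle (rc i) (ra i) (rb i))) = 0 ∧
        -- each rectangle has width at most `2 f(n₀)^{-t}`
        (∀ i, min (ra i) (rb i) ≤ 2 * f (n₀ : ℝ) ^ (-t)) ∧
        -- unweighted total perimeter bound
        2 * (∑ i, (ra i + rb i)) ≤ 25 * (M : ℝ) * f (n₀ : ℝ) ^ (-t) := by
  have hn₀' : (1 : ℝ) ≤ n₀ := by exact_mod_cast hn₀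
  have hu : 0 < f n₀ := hf_pos n₀ hn₀'
  refine efficient_packing_of_small_rectangle_general (x := fun n => f n ^ (-t)) hM
    (antitoneOn_natCast_rpow_neg (by linarith) hf_incr.monotoneOn hf_pos fun n hn =>
      hn₀'.trans (by exact_mod_cast hn.1)) (Real.rpow_pos_of_pos hu _) ?_ p a b hw hh
  push_cast
  refine one_sub_mul_rpow_neg_le_of_derivWithin_le (by linarith) ht₂.le (by positivity)
    (le_add_of_nonneg_right (by positivity)) (Icc_subset_Ici_self.trans (Ici_subset_Ici.2 hn₀'))
    (hf_smooth.differentiableOn (by simp)) hf_pos hderiv ?_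
  calc 1 / 4752 * ((M : ℝ) ^ 4)⁻¹ * f n₀ * (n₀ + 9 * M ^ 2 - n₀)
      = 1 / (528 * (M : ℝ) ^ 2) * f n₀ := by field_simp; ring
    _ ≤ 1 / (150 * (M : ℝ) ^ 2) * f n₀ := by gcongr; norm_num
end
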